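/- arXiv:1608.08421 — 2 statements merged into one kernel-verified Lean document; each statement's English description precedes it below -/
import Mathlib

section
/- Every respecting forest P of order 2 admits a covering into ℛ₂ which is an isomorphism onto its image and whose image consists of ordinals below 1^∞; in particular, every respecting forest of order 2 is, up to isomorphism, a finite substructure of ℛ₂ (a pure pattern of order 2). -/
open FirstOrder

/-- The relation symbols of the language of `ℛ₂`: three binary relations. -/
inductive ordRel : ℕ → Type
  | le : ordRel 2
  | le1 : ordRel 2
  | le2 : ordRel 2

/-- The first-order language with three binary relation symbols `≤`, `≤₁`, `≤₂`. -/
def ordLang : FirstOrder.Language := ⟨fun _ => Empty, ordRel⟩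

/-- The `ordLang`-structure on the set of ordinals below `β`, interpreting the three
relation symbols by `≤` and the given relations `le1`, `le2`. -/
def segStr (le1 le2 : Ordinal → Ordinal → Prop) (β : Ordinal) :
    ordLang.Structure {x : Ordinal // x < β} where
  funMap := fun f => Empty.elim f
  RelMap
    | .le => fun v => (v 0).1 ≤ (v 1).1
    | .le1 => fun v => le1 (v 0).1 (v 1).1
    | .le2 => fun v => le2 (v 0).1 (v 1).1

/-- Σ₁-formulas: a block of existential quantifiers applied to a quantifier-free formula. -/
inductive IsSigma1 {L : FirstOrder.Language} {α : Type} :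
    {n : ℕ} → L.BoundedFormula α n → Prop
  | of_isQF {n} {φ : L.BoundedFormula α n} (h : φ.IsQF) : IsSigma1 φ
  | ex {n} {φ : L.BoundedFormula α (n + 1)} (h : IsSigma1 φ) : IsSigma1 φ.ex

/-- Π₁-formulas: a block of universal quantifiers applied to a quantifier-free formula. -/
inductive IsPi1 {L : FirstOrder.Language} {α : Type} :
    {n : ℕ} → L.BoundedFormula α n → Prop
  | of_isQF {n} {φ : L.BoundedFormula α n} (h : φ.IsQF) : IsPi1 φ
  | all {n} {φ : L.BoundedFormula α (n + 1)} (h : IsPi1 φ) : IsPi1 φ.all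

/-- Σ₂-formulas: a block of existential quantifiers applied to a Π₁-formula. -/
inductive IsSigma2 {L : FirstOrder.Language} {α : Type} :
    {n : ℕ} → L.BoundedFormula α n → Prop
  | of_isPi1 {n} {φ : L.BoundedFormula α n} (h : IsPi1 φ) : IsSigma2 φ
  | ex {n} {φ : L.BoundedFormula α (n + 1)} (h : IsSigma2 φ) : IsSigma2 φ.ex

/-- Realization of a formula with `k` parameters in the segment structure below `β`. -/
def RealizeIn (le1 le2 : Ordinal → Ordinal → Prop) (β : Ordinal) {k : ℕ}
    (φ : ordLang.Formula (Fin k)) (v : Fin k → {x : Ordinal // x < β}) : Prop :=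
  letI := segStr le1 le2 β
  φ.Realize v

/-- `a ≤ b` and the segment below `a` is an elementary substructure of the segment below `b`
with respect to the class `C` of formulas (with parameters from below `a`). -/
def ElemSub (C : ∀ k : ℕ, ordLang.Formula (Fin k) → Prop)
    (le1 le2 : Ordinal → Ordinal → Prop) (a b : Ordinal) : Prop :=
  ∃ hab : a ≤ b,
    ∀ (k : ℕ) (φ : ordLang.Formula (Fin k)), C k φ →
      ∀ v : Fin k → {x : Ordinal // x < a},
        RealizeIn le1 le2 a φ v ↔
          RealizeIn le1 le2 b φ (fun j => ⟨(v j).1, lt_of_lt_of_le (v j).2 hab⟩)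

/-- The pair of relations `le1`, `le2` satisfies the simultaneous recursive definition of
`≤₁` and `≤₂` on the ordinals: `α ≤ᵢ β` iff `α ≤ β` and the segment below `α` is a
Σᵢ-elementary substructure of the segment below `β`. -/
def IsR2Pair (le1 le2 : Ordinal → Ordinal → Prop) : Prop :=
  (∀ a b, le1 a b ↔ ElemSub (fun _ φ => IsSigma1 φ) le1 le2 a b) ∧
  (∀ a b, le2 a b ↔ ElemSub (fun _ φ => IsSigma2 φ) le1 le2 a b)

/-- The strict part of `≤₁`. -/
def Lt1 (le1 : Ordinal → Ordinal → Prop) (a b : Ordinal) : Prop := le1 a b ∧ a ≠ b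

/-- The strict part of `≤₂`. -/
def Lt2 (le2 : Ordinal → Ordinal → Prop) (a b : Ordinal) : Prop := le2 a b ∧ a ≠ b

/-- `1^∞`: the least ordinal `ν` such that below `ν` there are `<₂`-chains of every finite
length. -/
noncomputable def OneInfty (le2 : Ordinal → Ordinal → Prop) : Ordinal :=
  sInf {ν : Ordinal | ∀ n : ℕ, ∃ β : Fin n → Ordinal,
    (∀ i, β i < ν) ∧
    ∀ (i : ℕ) (hi : i + 1 < n), Lt2 le2 (β ⟨i, Nat.lt_of_succ_lt hi⟩) (β ⟨i + 1, hi⟩)}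

/-- A respecting forest of order 2: a finite structure with a linear order `≤₀` and partial
orders `≤₁`, `≤₂` which are forests, with `≤₂ ⊆ ≤₁ ⊆ ≤₀`, and `≤ᵢ₊₁` respecting `≤ᵢ`. -/
structure RForest where
  P : Type
  [fintypeP : Fintype P]
  le0 : P → P → Prop
  le1 : P → P → Prop
  le2 : P → P → Prop
  le0_refl : ∀ p, le0 p p
  le0_trans : ∀ p q r, le0 p q → le0 q r → le0 p r
  le0_antisymm : ∀ p q, le0 p q → le0 q p → p = q
  le0_total : ∀ p q, le0 p q ∨ le0 q p
  le1_refl : ∀ p, le1 p p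
  le1_trans : ∀ p q r, le1 p q → le1 q r → le1 p r
  le1_antisymm : ∀ p q, le1 p q → le1 q p → p = q
  le2_refl : ∀ p, le2 p p
  le2_trans : ∀ p q r, le2 p q → le2 q r → le2 p r
  le2_antisymm : ∀ p q, le2 p q → le2 q p → p = q
  le2_sub_le1 : ∀ p q, le2 p q → le1 p q
  le1_sub_le0 : ∀ p q, le1 p q → le0 p q
  forest1 : ∀ p q r, le1 q p → le1 r p → le1 q r ∨ le1 r q
  forest2 : ∀ p q r, le2 q p → le2 r p → le2 q r ∨ le2 r q
  respects1 : ∀ p q r, le0 p q → le0 q r → le1 p r → le1 p q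
  respects2 : ∀ p q r, le1 p q → le1 q r → le2 p r → le2 p q

attribute [instance] RForest.fintypeP

/-- The finite set `X` of ordinals, with the relations induced from `ℛ₂`, is isomorphic to the
respecting forest `F`. -/
def Realizes (le1 le2 : Ordinal → Ordinal → Prop) (F : RForest) (X : Finset Ordinal) : Prop :=
  ∃ e : F.P ≃ {x // x ∈ X}, ∀ p q : F.P,
    (F.le0 p q ↔ ((e p : Ordinal) ≤ (e q : Ordinal))) ∧
    (F.le1 p q ↔ le1 (e p : Ordinal) (e q : Ordinal)) ∧
    (F.le2 p q ↔ le2 (e p : Ordinal) (e q : Ordinal))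

/-- Pointwise comparison of two finite sets of ordinals via their increasing enumerations. -/
def pwLE (X Y : Finset Ordinal) : Prop :=
  ∃ h : X.card = Y.card, ∀ i : Fin X.card,
    ((X.orderIsoOfFin rfl i : {x // x ∈ X}) : Ordinal) ≤
      ((Y.orderIsoOfFin h.symm i : {x // x ∈ Y}) : Ordinal)

/-- `X` is the isominimal realization of the respecting forest `F` in `ℛ₂`: it is isomorphic
to `F` and pointwise minimal among all finite substructures of `ℛ₂` isomorphic to `F`. -/
def IsIsominimalRealization (le1 le2 : Ordinal → Ordinal → Prop) (F : RForest)
    (X : Finset Ordinal) : Prop :=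
  Realizes le1 le2 F X ∧ ∀ Y : Finset Ordinal, Realizes le1 le2 F Y → pwLE X Y

/-- A covering of the respecting forest `F` into `ℛ₂`. -/
def IsCovering (le1 le2 : Ordinal → Ordinal → Prop) (F : RForest)
    (c : F.P → Ordinal) : Prop :=
  (∀ p q, F.le0 p q ↔ c p ≤ c q) ∧
  (∀ p q, F.le1 p q → le1 (c p) (c q)) ∧
  (∀ p q, F.le2 p q → le2 (c p) (c q))


/-- A covering of the respecting forest `F` into the respecting forest `G`. -/
def ForestCovering (F G : RForest) (f : F.P → G.P) : Prop :=
  (∀ p q, F.le0 p q ↔ G.le0 (f p) (f q)) ∧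
  (∀ p q, F.le1 p q → G.le1 (f p) (f q)) ∧
  (∀ p q, F.le2 p q → G.le2 (f p) (f q))


open FirstOrder.Language

namespace Pat

universe u

/-- Realization of bounded formulas in segments. -/
def SR (le1 le2 : Ordinal.{u} → Ordinal.{u} → Prop) (β : Ordinal.{u}) {α : Type} {n : ℕ}
    (φ : ordLang.BoundedFormula α n) (v : α → {x : Ordinal // x < β})
    (xs : Fin n → {x : Ordinal // x < β}) : Prop :=
  letI := segStr le1 le2 β
  φ.Realize v xs

/-- inclusion of segments -/
def inc {a b : Ordinal.{u}} (h : a ≤ b) (x : {x : Ordinal // x < a}) : {x : Ordinal // x < b} :=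
  ⟨x.1, lt_of_lt_of_le x.2 h⟩

section
variable {le1 le2 : Ordinal.{u} → Ordinal.{u} → Prop}

theorem SR_ex {β : Ordinal.{u}} {α : Type} {n : ℕ}
    (φ : ordLang.BoundedFormula α (n+1)) (v : α → {x : Ordinal // x < β})
    (xs : Fin n → {x : Ordinal // x < β}) :
    SR le1 le2 β φ.ex v xs ↔ ∃ a, SR le1 le2 β φ v (Fin.snoc xs a) := by
  let _ := segStr le1 le2 β
  exact BoundedFormula.realize_ex

theorem SR_all {β : Ordinal.{u}} {α : Type} {n : ℕ}
    (φ : ordLang.BoundedFormula α (n+1)) (v : α → {x : Ordinal // x < β})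
    (xs : Fin n → {x : Ordinal // x < β}) :
    SR le1 le2 β φ.all v xs ↔ ∀ a, SR le1 le2 β φ v (Fin.snoc xs a) := by
  let _ := segStr le1 le2 β
  exact BoundedFormula.realize_all

theorem term_eq {α : Type} (t : ordLang.Term α) : ∃ i, t = Term.var i := by
  cases t with
  | var i => exact ⟨i, rfl⟩
  | func f _ => exact Empty.elim f

theorem inc_snoc {a b : Ordinal.{u}} (h : a ≤ b) {n : ℕ} (xs : Fin n → {x : Ordinal // x < a}) (y) :
    inc h ∘ (Fin.snoc xs y : Fin (n+1) → {x : Ordinal // x < a}) =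
      (Fin.snoc (inc h ∘ xs) (inc h y) : Fin (n+1) → {x : Ordinal // x < b}) :=
  Fin.comp_snoc _ _ _

theorem SR_qf {a b : Ordinal.{u}} (h : a ≤ b) {α : Type} {n : ℕ}
    {φ : ordLang.BoundedFormula α n} (hφ : φ.IsQF) (v : α → {x : Ordinal // x < a})
    (xs : Fin n → {x : Ordinal // x < a}) :
    SR le1 le2 a φ v xs ↔ SR le1 le2 b φ (inc h ∘ v) (inc h ∘ xs) := by
  induction hφ with
  | falsum => exact Iff.rfl
  | imp _ _ h1 h2 => exact imp_congr h1 h2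
  | of_isAtomic hh =>
    cases hh with
    | equal t1 t2 =>
      obtain ⟨i, rfl⟩ := term_eq t1
      obtain ⟨j, rfl⟩ := term_eq t2
      have : ∀ k, Sum.elim (inc h ∘ v) (inc h ∘ xs) k = inc h (Sum.elim v xs k) := by
        rintro (k | k) <;> rfl
      change Sum.elim v xs i = Sum.elim v xs j ↔
        Sum.elim (inc h ∘ v) (inc h ∘ xs) i = Sum.elim (inc h ∘ v) (inc h ∘ xs) j
      rw [this, this]
      simp [inc, Subtype.ext_iff]
    | rel R ts =>
      have key : ∀ i, ((@Term.realize ordLang _ (segStr le1 le2 b) _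
          (Sum.elim (inc h ∘ v) (inc h ∘ xs)) (ts i)).1 : Ordinal)
          = (@Term.realize ordLang _ (segStr le1 le2 a) _ (Sum.elim v xs) (ts i)).1 := by
        intro i
        obtain ⟨k, hk⟩ := term_eq (ts i)
        rw [hk]
        rcases k with k | k <;> rfl
      cases R with
      | le =>
        change (_ ≤ _) ↔ (_ ≤ _)
        rw [key, key]
      | le1 =>
        change le1 _ _ ↔ le1 _ _
        rw [key, key]
      | le2 =>
        change le2 _ _ ↔ le2 _ _
        rw [key, key]

theorem SR_sigma1 {a b : Ordinal.{u}} (h : a ≤ b) {α : Type} {n : ℕ}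
    {φ : ordLang.BoundedFormula α n} (hφ : IsSigma1 φ) (v : α → {x : Ordinal // x < a})
    (xs : Fin n → {x : Ordinal // x < a}) :
    SR le1 le2 a φ v xs → SR le1 le2 b φ (inc h ∘ v) (inc h ∘ xs) := by
  induction hφ with
  | of_isQF hq => exact (SR_qf h hq v xs).1
  | ex _ ih =>
    rw [SR_ex, SR_ex]
    rintro ⟨y, hy⟩
    refine ⟨inc h y, ?_⟩
    rw [← inc_snoc]
    exact ih _ hy

theorem SR_limit {b : Ordinal.{u}} (hb : ∀ x < b, ∃ y < b, x < y) (p : Ordinal.{u}) (hp : p < b)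
    {α : Type} {n : ℕ}
    {φ : ordLang.BoundedFormula α n} (hφ : IsSigma1 φ) (v : α → {x : Ordinal // x < b})
    (hv : ∀ i, (v i).1 < p)
    (xs : Fin n → {x : Ordinal // x < b}) (h : SR le1 le2 b φ v xs) :
    ∀ q, p ≤ q → q < b → (∀ i, (xs i).1 < q) → 
     ∃ (z : Ordinal.{u}) (hz : q ≤ z) (hzb : z < b) (v' : α → {x : Ordinal // x < z})
     (xs' : Fin n → {x : Ordinal // x < z}), inc hzb.le ∘ v' = v ∧ inc hzb.le ∘ xs' = xs ∧ 
       SR le1 le2 z φ v' xs' := by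
  induction hφ with
  | of_isQF hq => 
    intro q hpq hqb hxs
    have hh := (SR_qf (le1 := le1) (le2 := le2) hqb.le hq (fun i => ⟨(v i).1, (hv i).trans_le hpq⟩)
      (fun i => ⟨(xs i).1, hxs i⟩)).2 h
    exact ⟨q, le_rfl, hqb, _, _, rfl, rfl, hh⟩
  | @ex n φ _ ih =>
    intro q hpq hqb hxs
    rw [SR_ex] at h
    obtain ⟨y, hy⟩ := h
    obtain ⟨w, hw, hyw⟩ := hb (max q y.1) (max_lt hqb y.2)
    obtain ⟨z, hz, hzb, v', xs', e1, e2, e3⟩ := ih _ hy w (hpq.trans ((le_max_left _ _).trans hyw.le)) hw 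
      (by
        intro i
        refine Fin.lastCases ?_ (fun i => ?_) i
        · simpa using (le_max_right _ _).trans_lt hyw
        · simpa using (hxs i).trans ((le_max_left _ _).trans_lt hyw))
    refine ⟨z, ((le_max_left _ _).trans hyw.le).trans hz, hzb, v', Fin.init xs', e1, ?_, ?_⟩
    · funext i
      have := congrFun e2 i.castSucc
      simpa [Fin.init] using this
    · rw [SR_ex]
      refine ⟨xs' (Fin.last _), ?_⟩
      rw [Fin.snoc_init_self]
      exact e3

theorem SR_pi1_down {a b : Ordinal.{u}} (h : a ≤ b) {α : Type} {n : ℕ}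
    {φ : ordLang.BoundedFormula α n} (hφ : IsPi1 φ) (v : α → {x : Ordinal // x < a})
    (xs : Fin n → {x : Ordinal // x < a}) :
    SR le1 le2 b φ (inc h ∘ v) (inc h ∘ xs) → SR le1 le2 a φ v xs := by
  induction hφ with
  | of_isQF hq => exact (SR_qf h hq v xs).2
  | all _ ih =>
    rw [SR_all, SR_all]
    intro H y
    apply ih
    rw [inc_snoc]
    exact H _

theorem sigma1_sub {L : FirstOrder.Language} {α : Type} {n : ℕ} {φ : L.BoundedFormula α n}
    (h : IsSigma1 φ) : IsSigma2 φ := by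
  induction h with
  | of_isQF h => exact .of_isPi1 (.of_isQF h)
  | ex _ ih => exact .ex ih

/-- negation of Pi1 is semantically Sigma1 -/
theorem pi1_neg {α : Type} {n : ℕ} {φ : ordLang.BoundedFormula α n} (h : IsPi1 φ) :
    ∃ ψ : ordLang.BoundedFormula α n, IsSigma1 ψ ∧ 
      ∀ (β : Ordinal.{u}) v xs, SR le1 le2 β ψ v xs ↔ ¬ SR le1 le2 β φ v xs := by
  induction h with
  | of_isQF h => exact ⟨_, .of_isQF h.not, fun β v xs => Iff.rfl⟩
  | all _ ih =>
    obtain ⟨ψ, h1, h2⟩ := ih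
    refine ⟨ψ.ex, .ex h1, fun β v xs => ?_⟩
    rw [SR_ex, SR_all]
    simp [h2]

theorem sigma1_relabel {L : FirstOrder.Language} {α β : Type} {m n : ℕ} {φ : L.BoundedFormula α m}
    (h : IsSigma1 φ) (f : α → β ⊕ (Fin n)) : IsSigma1 (φ.relabel f) := by
  induction h with
  | of_isQF h => exact .of_isQF (h.relabel f)
  | ex _ ih => rw [BoundedFormula.relabel_ex]; exact .ex ih

theorem pi1_relabel {L : FirstOrder.Language} {α β : Type} {m n : ℕ} {φ : L.BoundedFormula α m}
    (h : IsPi1 φ) (f : α → β ⊕ (Fin n)) : IsPi1 (φ.relabel f) := by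
  induction h with
  | of_isQF h => exact .of_isQF (h.relabel f)
  | all _ ih => rw [BoundedFormula.relabel_all]; exact .all ih

theorem sigma1_exs {L : FirstOrder.Language} {α : Type} : ∀ {n : ℕ} {φ : L.BoundedFormula α n},
    IsSigma1 φ → IsSigma1 φ.exs
  | 0, _, h => h
  | _+1, φ, h => sigma1_exs (φ := φ.ex) (IsSigma1.ex h)

theorem pi1_alls {L : FirstOrder.Language} {α : Type} : ∀ {n : ℕ} {φ : L.BoundedFormula α n},
    IsPi1 φ → IsPi1 φ.alls
  | 0, _, h => h
  | _+1, φ, h => pi1_alls (φ := φ.all) (IsPi1.all h)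

theorem sigma2_exs {L : FirstOrder.Language} {α : Type} : ∀ {n : ℕ} {φ : L.BoundedFormula α n},
    IsSigma2 φ → IsSigma2 φ.exs
  | 0, _, h => h
  | _+1, φ, h => sigma2_exs (φ := φ.ex) (IsSigma2.ex h)

/-- Elementarity with explicit bounded formulas with bound variables. -/
theorem elem_sigma1 {a b : Ordinal.{u}} (hab : ElemSub (fun _ φ => IsSigma1 φ) le1 le2 a b)
    {k n : ℕ} {φ : ordLang.BoundedFormula (Fin k) n} (hφ : IsSigma1 φ)
    (v : Fin k → {x : Ordinal // x < a}) (xs : Fin n → {x : Ordinal // x < a}) :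
    SR le1 le2 a φ v xs ↔ SR le1 le2 b φ (inc hab.1 ∘ v) (inc hab.1 ∘ xs) := by
  -- turn the bound variables into parameters
  obtain ⟨h, H⟩ := hab
  refine ⟨SR_sigma1 h hφ v xs, fun hb => ?_⟩
  let ψ : ordLang.Formula (Fin k ⊕ Fin n) := BoundedFormula.toFormula φ
  have hψ : IsSigma1 ψ := by
    have : ∀ {n : ℕ} {φ : ordLang.BoundedFormula (Fin k) n}, IsSigma1 φ → IsSigma1 φ.toFormula := by
      intro n φ hφ
      induction hφ with
      | of_isQF h =>
        refine .of_isQF ?_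
        induction h with
        | falsum => exact .falsum
        | imp _ _ h1 h2 => exact .imp h1 h2
        | of_isAtomic hh =>
          cases hh with
          | equal t1 t2 => exact .of_isAtomic (.equal _ _)
          | rel R ts => exact .of_isAtomic (.rel _ _)
      | ex _ ih =>
        exact .ex (sigma1_relabel ih _)
    exact this hφ
  have e : Fin k ⊕ Fin n ≃ Fin (k + n) := finSumFinEquiv
  have hH := H (k+n) (ψ.relabel e) (sigma1_relabel hψ _) (Sum.elim v xs ∘ e.symm)
  have r1 : RealizeIn le1 le2 a (ψ.relabel e) (Sum.elim v xs ∘ e.symm) ↔ SR le1 le2 a φ v xs := by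
    let _ := segStr le1 le2 a
    refine Formula.realize_relabel.trans ?_
    rw [Function.comp_assoc, Equiv.symm_comp_self, Function.comp_id]
    refine (BoundedFormula.realize_toFormula _ _).trans ?_
    exact Iff.rfl
  have r2 : RealizeIn le1 le2 b (ψ.relabel e) (fun j => inc h ((Sum.elim v xs ∘ e.symm) j)) ↔
      SR le1 le2 b φ (inc h ∘ v) (inc h ∘ xs) := by
    let _ := segStr le1 le2 b
    refine Formula.realize_relabel.trans ?_
    refine (BoundedFormula.realize_toFormula _ _).trans ?_
    have : ∀ q, ((fun j => inc h ((Sum.elim v xs ∘ e.symm) j)) ∘ e) q = inc h (Sum.elim v xs q) := by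
      intro q; simp
    have e1 : ((fun j => inc h ((Sum.elim v xs ∘ e.symm) j)) ∘ e) ∘ Sum.inl = inc h ∘ v := by
      funext q; exact this _
    have e2 : ((fun j => inc h ((Sum.elim v xs ∘ e.symm) j)) ∘ e) ∘ Sum.inr = inc h ∘ xs := by
      funext q; exact this _
    rw [e1, e2]
    exact Iff.rfl
  exact r1.1 (hH.2 (r2.2 hb))

theorem elem_pi1 {a b : Ordinal.{u}} (hab : ElemSub (fun _ φ => IsSigma1 φ) le1 le2 a b)
    {k n : ℕ} {φ : ordLang.BoundedFormula (Fin k) n} (hφ : IsPi1 φ)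
    (v : Fin k → {x : Ordinal // x < a}) (xs : Fin n → {x : Ordinal // x < a}) :
    SR le1 le2 a φ v xs ↔ SR le1 le2 b φ (inc hab.1 ∘ v) (inc hab.1 ∘ xs) := by
  obtain ⟨ψ, h1, h2⟩ := pi1_neg (le1 := le1) (le2 := le2) hφ
  have := elem_sigma1 hab h1 v xs
  rw [h2, h2] at this
  exact not_iff_not.1 this

theorem sigma2_up {a b : Ordinal.{u}} (hab : ElemSub (fun _ φ => IsSigma1 φ) le1 le2 a b)
    {k n : ℕ} {φ : ordLang.BoundedFormula (Fin k) n} (hφ : IsSigma2 φ)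
    (v : Fin k → {x : Ordinal // x < a}) (xs : Fin n → {x : Ordinal // x < a}) :
    SR le1 le2 a φ v xs → SR le1 le2 b φ (inc hab.1 ∘ v) (inc hab.1 ∘ xs) := by
  induction hφ with
  | of_isPi1 h => exact (elem_pi1 hab h v xs).1
  | ex _ ih =>
    rw [SR_ex, SR_ex]
    rintro ⟨y, hy⟩
    refine ⟨inc hab.1 y, ?_⟩
    rw [← inc_snoc]
    exact ih _ hy

theorem realizeIn_iff {b : Ordinal.{u}} {k : ℕ} (φ : ordLang.Formula (Fin k))
    (v : Fin k → {x : Ordinal // x < b}) (xs : Fin 0 → {x : Ordinal // x < b}) :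
    RealizeIn le1 le2 b φ v ↔ SR le1 le2 b φ v xs := by
  rw [Subsingleton.elim xs default]
  exact Iff.rfl

theorem ElemSub.refl' (C) (a : Ordinal.{u}) : ElemSub C le1 le2 a a :=
  ⟨le_rfl, fun _ _ _ _ => Iff.rfl⟩

theorem ElemSub.trans' {C} {a b c : Ordinal.{u}} (h1 : ElemSub C le1 le2 a b)
    (h2 : ElemSub C le1 le2 b c) : ElemSub C le1 le2 a c :=
  ⟨h1.1.trans h2.1, fun k φ hφ v => (h1.2 k φ hφ v).trans (h2.2 k φ hφ _)⟩

/-- Structural facts on the two relations -/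
structure Facts (le1 le2 : Ordinal.{u} → Ordinal.{u} → Prop) : Prop where
  refl1 : ∀ a, le1 a a
  refl2 : ∀ a, le2 a a
  trans1 : ∀ {a b c}, le1 a b → le1 b c → le1 a c
  trans2 : ∀ {a b c}, le2 a b → le2 b c → le2 a c
  sub0 : ∀ {a b}, le1 a b → a ≤ b
  sub1 : ∀ {a b}, le2 a b → le1 a b
  resp1 : ∀ {a b c}, a ≤ b → b ≤ c → le1 a c → le1 a b
  resp2 : ∀ {a b c}, le1 a b → le1 b c → le2 a c → le2 a b
  lim1 : ∀ {a b}, (∀ x < b, ∃ y < b, x < y) → a < b → (∀ z, a ≤ z → z < b → le1 a z) → le1 a b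

theorem facts (h : IsR2Pair le1 le2) : Facts le1 le2 := by
  obtain ⟨H1, H2⟩ := h
  refine ⟨fun a => (H1 _ _).2 (ElemSub.refl' _ _), fun a => (H2 _ _).2 (ElemSub.refl' _ _), 
    fun h1 h2 => (H1 _ _).2 (ElemSub.trans' ((H1 _ _).1 h1) ((H1 _ _).1 h2)),
    fun h1 h2 => (H2 _ _).2 (ElemSub.trans' ((H2 _ _).1 h1) ((H2 _ _).1 h2)),
    fun h => ((H1 _ _).1 h).1,
    fun h => (H1 _ _).2 ⟨((H2 _ _).1 h).1, fun k φ hφ v => ((H2 _ _).1 h).2 k φ (sigma1_sub hφ) v⟩,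
    ?_, ?_, ?_⟩
  · intro a b c hab hbc hac
    obtain ⟨hac', hac⟩ := (H1 _ _).1 hac
    refine (H1 _ _).2 ⟨hab, fun k φ hφ v => ?_⟩
    rw [realizeIn_iff _ _ Fin.elim0, realizeIn_iff _ _ (inc hab ∘ Fin.elim0)]
    refine ⟨SR_sigma1 hab hφ v _, fun hb => ?_⟩
    have := SR_sigma1 hbc hφ _ _ hb
    have h3 := hac k φ hφ v
    rw [realizeIn_iff _ _ Fin.elim0, realizeIn_iff _ _ (inc hbc ∘ inc hab ∘ Fin.elim0)] at h3
    exact h3.2 this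
  · intro a b c hab hbc hac
    obtain ⟨hac', hac⟩ := (H2 _ _).1 hac
    have hab := (H1 _ _).1 hab
    have hbc := (H1 _ _).1 hbc
    refine (H2 _ _).2 ⟨hab.1, fun k φ hφ v => ?_⟩
    rw [realizeIn_iff _ _ Fin.elim0, realizeIn_iff _ _ (inc hab.1 ∘ Fin.elim0)]
    refine ⟨sigma2_up hab hφ v _, fun hb => ?_⟩
    have := sigma2_up hbc hφ _ _ hb
    have h3 := hac k φ hφ v
    rw [realizeIn_iff _ _ Fin.elim0, realizeIn_iff _ _ (inc hbc.1 ∘ inc hab.1 ∘ Fin.elim0)] at h3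
    exact h3.2 this
  · intro a b hlim hab hz
    refine (H1 _ _).2 ⟨hab.le, fun k φ hφ v => ?_⟩
    rw [realizeIn_iff _ _ Fin.elim0, realizeIn_iff _ _ (inc hab.le ∘ Fin.elim0)]
    refine ⟨SR_sigma1 hab.le hφ v _, fun hb => ?_⟩
    obtain ⟨z, hqz, hzb, v', xs', e1, e2, e3⟩ := SR_limit hlim a hab hφ _ (fun i => (v i).2) _ hb a le_rfl hab
      (fun i => i.elim0)
    have h4 := (H1 _ _).1 (hz z hqz hzb)
    have h5 := (h4.2 k φ hφ v)
    rw [realizeIn_iff _ _ Fin.elim0, realizeIn_iff _ _ (inc h4.1 ∘ Fin.elim0)] at h5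
    refine h5.2 ?_
    have e4 : v' = fun j => ⟨(v j).1, lt_of_lt_of_le (v j).2 h4.1⟩ := by
      funext j
      have := congrArg Subtype.val (congrFun e1 j)
      exact Subtype.ext this
    rw [← e4]
    convert e3 using 1

end
end Pat

namespace Pat
universe u
section
variable {le1 le2 : Ordinal.{u} → Ordinal.{u} → Prop}

/-- Quantifier-free definable predicates. -/
def QFP (le1 le2 : Ordinal.{u} → Ordinal.{u} → Prop) {α : Type}
    (R : (α → Ordinal.{u}) → Prop) : Prop :=
  ∃ φ : ordLang.Formula α, BoundedFormula.IsQF φ ∧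
    ∀ (β : Ordinal.{u}) (v : α → {x : Ordinal // x < β}) (xs),
      SR le1 le2 β φ v xs ↔ R (fun i => (v i).1)

theorem qle {α : Type} (i j : α) : QFP le1 le2 (fun f => f i ≤ f j) :=
  ⟨.rel (n := 0) (L := ordLang) (l := 2) ordRel.le ![Term.var (Sum.inl i), Term.var (Sum.inl j)],
    .of_isAtomic (.rel _ _), fun _ _ _ => Iff.rfl⟩

theorem qle1 {α : Type} (i j : α) : QFP le1 le2 (fun f => le1 (f i) (f j)) :=
  ⟨.rel (n := 0) (L := ordLang) (l := 2) ordRel.le1 ![Term.var (Sum.inl i), Term.var (Sum.inl j)],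
    .of_isAtomic (.rel _ _), fun _ _ _ => Iff.rfl⟩

theorem qle2 {α : Type} (i j : α) : QFP le1 le2 (fun f => le2 (f i) (f j)) :=
  ⟨.rel (n := 0) (L := ordLang) (l := 2) ordRel.le2 ![Term.var (Sum.inl i), Term.var (Sum.inl j)],
    .of_isAtomic (.rel _ _), fun _ _ _ => Iff.rfl⟩

theorem qimp {α : Type} {R S : (α → Ordinal.{u}) → Prop} (h1 : QFP le1 le2 R)
    (h2 : QFP le1 le2 S) : QFP le1 le2 (fun f => R f → S f) := by
  obtain ⟨φ, a1, a2⟩ := h1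
  obtain ⟨ψ, b1, b2⟩ := h2
  exact ⟨φ.imp ψ, a1.imp b1, fun β v xs => imp_congr (a2 β v xs) (b2 β v xs)⟩

theorem qfalse {α : Type} : QFP le1 le2 (fun _ : α → Ordinal.{u} => False) :=
  ⟨.falsum, .falsum, fun _ _ _ => Iff.rfl⟩

theorem qnot {α : Type} {R : (α → Ordinal.{u}) → Prop} (h1 : QFP le1 le2 R) :
    QFP le1 le2 (fun f => ¬ R f) := qimp h1 qfalse

theorem qconst {α : Type} (c : Prop) : QFP le1 le2 (fun _ : α → Ordinal.{u} => c) := by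
  by_cases h : c
  · simpa [h] using qnot (qfalse (α := α) (le1 := le1) (le2 := le2))
  · simpa [h] using (qfalse (α := α) (le1 := le1) (le2 := le2))

theorem qor {α : Type} {R S : (α → Ordinal.{u}) → Prop} (h1 : QFP le1 le2 R)
    (h2 : QFP le1 le2 S) : QFP le1 le2 (fun f => R f ∨ S f) := by
  have := qimp (qnot h1) h2
  simpa only [← or_iff_not_imp_left] using this

theorem qand {α : Type} {R S : (α → Ordinal.{u}) → Prop} (h1 : QFP le1 le2 R)
    (h2 : QFP le1 le2 S) : QFP le1 le2 (fun f => R f ∧ S f) := by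
  have := qnot (qimp h1 (qnot h2))
  simpa only [_root_.not_imp, not_not] using this

theorem qiff {α : Type} {R S : (α → Ordinal.{u}) → Prop} (h1 : QFP le1 le2 R)
    (h2 : QFP le1 le2 S) : QFP le1 le2 (fun f => R f ↔ S f) := by
  have := qand (qimp h1 h2) (qimp h2 h1)
  simpa only [← iff_def] using this

theorem qlt {α : Type} (i j : α) : QFP le1 le2 (fun f => f i < f j) := by
  have := qnot (qle (le1 := le1) (le2 := le2) j i)
  simpa only [not_le] using this

theorem qall {α ι : Type} [Finite ι] {R : ι → (α → Ordinal.{u}) → Prop}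
    (h : ∀ i, QFP le1 le2 (R i)) : QFP le1 le2 (fun f => ∀ i, R i f) := by
  have : Fintype ι := Fintype.ofFinite ι
  classical
  have key : ∀ s : Finset ι, QFP le1 le2 (fun f => ∀ i ∈ s, R i f) := by
    intro s
    induction s using Finset.induction_on with
    | empty => simpa using qconst (le1 := le1) (le2 := le2) (α := α) True
    | insert a s _ ih =>
      have := qand (h a) ih
      simpa using this
  simpa using key Finset.univ

theorem L1 (H : IsR2Pair le1 le2) {a b : Ordinal.{u}} (hab : le1 a b) {A Y : Type} [Finite A] [Finite Y]
    {R : (A ⊕ Y → Ordinal.{u}) → Prop} (hR : QFP le1 le2 R) (v : A → Ordinal.{u})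
    (hv : ∀ i, v i < a) (y : Y → Ordinal.{u}) (hy : ∀ i, y i < b) (hRy : R (Sum.elim v y)) :
    ∃ y' : Y → Ordinal.{u}, (∀ i, y' i < a) ∧ R (Sum.elim v y') := by
  obtain ⟨φ, hφ, hφR⟩ := hR
  obtain ⟨k, ⟨e⟩⟩ := Finite.exists_equiv_fin A
  let ψ : ordLang.Formula (Fin k) := Formula.iExs Y (φ.relabel (Sum.map e id))
  have hψ : IsSigma1 ψ := sigma1_exs (.of_isQF ((hφ.relabel _).relabel _))
  obtain ⟨hle, hE⟩ := (H.1 a b).1 hab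
  have hE := hE k ψ hψ (fun i => ⟨v (e.symm i), hv _⟩)
  have key : ∀ (β : Ordinal.{u}) (w : Fin k → {x : Ordinal // x < β}),
      (∀ i, (w i).1 = v (e.symm i)) → (RealizeIn le1 le2 β ψ w ↔
      ∃ y' : Y → Ordinal.{u}, (∀ i, y' i < β) ∧ R (Sum.elim v y')) := by
    intro β w hw
    let _ := segStr le1 le2 β
    refine (Formula.realize_iExs).trans ?_
    constructor
    · rintro ⟨y, hy⟩
      rw [Formula.realize_relabel] at hy
      refine ⟨fun i => (y i).1, fun i => (y i).2, ?_⟩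
      have := (hφR β _ _).1 hy
      convert this using 1
      funext i
      rcases i with i | i <;> simp [hw]
    · rintro ⟨y, hy, hRy⟩
      refine ⟨fun i => ⟨y i, hy i⟩, ?_⟩
      rw [Formula.realize_relabel]
      refine (hφR β _ _).2 ?_
      convert hRy using 1
      funext i
      rcases i with i | i <;> simp [hw]
  rw [key a _ (fun i => rfl), key b _ (fun i => rfl)] at hE
  exact hE.2 ⟨y, hy, hRy⟩

theorem L2 (H : IsR2Pair le1 le2) {a b : Ordinal.{u}} (hab : le2 a b) {A W Y : Type} [Finite A]
    [Finite Y] [Finite W]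
    {R : ((A ⊕ W) ⊕ Y → Ordinal.{u}) → Prop} (hR : QFP le1 le2 R) (v : A → Ordinal.{u})
    (hv : ∀ i, v i < a) (hRa : ∀ w : W → Ordinal.{u}, (∀ i, w i < a) → ∃ y : Y → Ordinal.{u},
      (∀ i, y i < a) ∧ R (Sum.elim (Sum.elim v w) y)) :
    ∀ w : W → Ordinal.{u}, (∀ i, w i < b) → ∃ y : Y → Ordinal.{u},
      (∀ i, y i < b) ∧ R (Sum.elim (Sum.elim v w) y) := by
  obtain ⟨φ, hφ, hφR⟩ := qnot hR
  obtain ⟨k, ⟨e⟩⟩ := Finite.exists_equiv_fin A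
  let ψ : ordLang.Formula (Fin k) :=
    Formula.iExs W (Formula.iAlls Y (φ.relabel (Sum.map (Sum.map e id) id)))
  have hψ : IsSigma2 ψ := sigma2_exs (.of_isPi1
    (pi1_relabel (pi1_alls (.of_isQF ((hφ.relabel _).relabel _))) _))
  obtain ⟨hle, hE⟩ := (H.2 a b).1 hab
  have hE := hE k ψ hψ (fun i => ⟨v (e.symm i), hv _⟩)
  have key : ∀ (β : Ordinal.{u}) (w : Fin k → {x : Ordinal // x < β}),
      (∀ i, (w i).1 = v (e.symm i)) → (RealizeIn le1 le2 β ψ w ↔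
      ¬ ∀ w : W → Ordinal.{u}, (∀ i, w i < β) → ∃ y : Y → Ordinal.{u},
      (∀ i, y i < β) ∧ R (Sum.elim (Sum.elim v w) y)) := by
    intro β w hw
    let _ := segStr le1 le2 β
    refine (Formula.realize_iExs).trans ?_
    push Not
    constructor
    · rintro ⟨x, hx⟩
      rw [Formula.realize_iAlls] at hx
      refine ⟨fun i => (x i).1, fun i => (x i).2, fun y hy => ?_⟩
      have h1 := hx (fun i => ⟨y i, hy i⟩)
      rw [Formula.realize_relabel] at h1
      have := (hφR β _ _).1 h1
      convert this using 2
      funext i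
      rcases i with (i | i) | i <;> simp [hw]
    · rintro ⟨x, hx, h1⟩
      refine ⟨fun i => ⟨x i, hx i⟩, ?_⟩
      rw [Formula.realize_iAlls]
      intro y
      rw [Formula.realize_relabel]
      refine (hφR β _ _).2 ?_
      convert h1 (fun i => (y i).1) (fun i => (y i).2) using 2
      rename_i i
      rcases i with (i | i) | i <;> simp [hw]
  rw [key a _ (fun i => rfl), key b _ (fun i => rfl)] at hE
  exact (not_iff_not.1 hE).1 hRa

/-- The structure on all ordinals. -/
def ordStr (le1 le2 : Ordinal.{u} → Ordinal.{u} → Prop) : ordLang.Structure Ordinal.{u} where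
  funMap := fun f => Empty.elim f
  RelMap
    | .le => fun v => (v 0) ≤ (v 1)
    | .le1 => fun v => le1 (v 0) (v 1)
    | .le2 => fun v => le2 (v 0) (v 1)

/-- elementarity of a segment in the class of ordinals -/
def FullElem (le1 le2 : Ordinal.{u} → Ordinal.{u} → Prop) (a : Ordinal.{u}) : Prop :=
  ∀ (k : ℕ) (φ : ordLang.Formula (Fin k)) (v : Fin k → {x : Ordinal // x < a}),
    (RealizeIn le1 le2 a φ v ↔ @Formula.Realize ordLang _ (ordStr le1 le2) _ φ (fun i => (v i).1))

theorem full_exists (c : Ordinal.{u}) : ∃ a, c < a ∧ FullElem le1 le2 a := by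
  classical
  let S := ordStr le1 le2
  -- witness function
  let w : (Σ n, ordLang.BoundedFormula Empty (n+1)) → (ℕ → Ordinal.{u}) → Ordinal.{u} :=
    fun φ x => if h : ∃ a : Ordinal.{u}, φ.2.Realize (M := Ordinal.{u}) default
      (Fin.snoc (α := fun _ => Ordinal.{u}) (fun i : Fin φ.1 => x i) a) then h.choose else 0
  let I : Ordinal.{u} → Type (u+1) := fun g => 
    Σ φ : (Σ n, ordLang.BoundedFormula Empty (n+1)), (Fin φ.1 → Set.Iio g)
  let ext : (g : Ordinal.{u}) → (i : I g) → ℕ → Ordinal.{u} := fun g i n =>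
    if h : n < i.1.1 then (i.2 ⟨n, h⟩).1 else 0
  let step : Ordinal.{u} → Ordinal.{u} := fun g => max (Order.succ g) (⨆ i : I g, Order.succ (w i.1 (ext g i)))
  let s : ℕ → Ordinal.{u} := fun n => step^[n] (Order.succ c)
  have hs : ∀ n, s (n+1) = step (s n) := fun n => Function.iterate_succ_apply' _ _ _
  have hlt : ∀ n, s n < s (n+1) := by
    intro n; rw [hs]; exact (Order.lt_succ _).trans_le (le_max_left _ _)
  have hmono : StrictMono s := strictMono_nat_of_lt_succ hlt
  obtain ⟨a, ha⟩ : ∃ a, a = ⨆ n, s n := ⟨_, rfl⟩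
  refine ⟨a, ?_, ?_⟩
  · rw [ha]
    exact (Order.lt_succ c).trans_le (Ordinal.le_iSup s 0)
  · intro k φ v
    let _ := segStr le1 le2 a
    let f : {x : Ordinal // x < a} ↪[ordLang] Ordinal.{u} := 
      { toFun := Subtype.val
        inj' := Subtype.val_injective
        map_fun' := fun f => Empty.elim f
        map_rel' := by
          intro n r x
          cases r <;> exact Iff.rfl }
    refine (Embedding.isElementary_of_exists f ?_ φ v).symm
    intro n φ x b hb
    have : ∃ m, ∀ i, (x i).1 < s m := by
      have h1 : ∀ i, ∃ m, (x i).1 < s m := fun i => by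
        exact Ordinal.lt_iSup_iff.1 ((x i).2.trans_eq ha)
      choose m hm using h1
      exact ⟨Finset.univ.sup m, fun i => (hm i).trans_le (hmono.monotone (Finset.le_sup (Finset.mem_univ i)))⟩
    obtain ⟨m, hm⟩ := this
    let ii : I (s m) := ⟨⟨n, φ⟩, fun i => ⟨(x i).1, hm i⟩⟩
    have hext : (fun i : Fin n => ext (s m) ii i) = f ∘ x := by
      funext i
      simp [ext, ii]; rfl
    have hex : ∃ a : Ordinal.{u}, φ.Realize (M := Ordinal.{u}) default
      (Fin.snoc (α := fun _ => Ordinal.{u}) (fun i : Fin n => ext (s m) ii i) a) := by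
      rw [hext]; exact ⟨b, by convert hb⟩
    have hw : φ.Realize (M := Ordinal.{u}) default
      (Fin.snoc (α := fun _ => Ordinal.{u}) (f ∘ x) (w ii.1 (ext (s m) ii))) := by
      have : w ii.1 (ext (s m) ii) = hex.choose := dif_pos hex
      rw [this, ← hext]
      exact hex.choose_spec
    have hwa : w ii.1 (ext (s m) ii) < a := by
      have h1 : w ii.1 (ext (s m) ii) < s (m+1) := by
        rw [hs]
        refine lt_of_lt_of_le (Order.lt_succ _) (le_trans ?_ (le_max_right _ _))
        exact Ordinal.le_iSup (fun i : I (s m) => Order.succ (w i.1 (ext (s m) i))) ii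
      rw [ha]
      exact h1.trans_le (Ordinal.le_iSup s _)
    refine ⟨⟨_, hwa⟩, ?_⟩
    convert hw using 1
    rfl

theorem chain_exists (H : IsR2Pair le1 le2) : ∃ β : ℕ → Ordinal.{u}, ∀ n, Lt2 le2 (β n) (β (n+1)) := by
  choose g hg1 hg2 using full_exists (le1 := le1) (le2 := le2)
  refine ⟨fun n => g^[n+1] 0, fun n => ?_⟩
  have e1 : g^[n+1] 0 = g (g^[n] 0) := Function.iterate_succ_apply' _ _ _
  have e2 : g^[n+1+1] 0 = g (g (g^[n] 0)) := by
    rw [Function.iterate_succ_apply', Function.iterate_succ_apply']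
  change Lt2 le2 (g^[n+1] 0) (g^[n+1+1] 0)
  rw [e1, e2]
  refine ⟨?_, (hg1 _).ne⟩
  refine (H.2 _ _).2 ⟨(hg1 _).le, fun k φ _ v => ?_⟩
  rw [hg2, hg2]

theorem oneInfty_chain (H : IsR2Pair le1 le2) (n : ℕ) : ∃ β : Fin n → Ordinal.{u},
    (∀ i, β i < OneInfty le2) ∧
    ∀ (i : ℕ) (hi : i + 1 < n), Lt2 le2 (β ⟨i, Nat.lt_of_succ_lt hi⟩) (β ⟨i + 1, hi⟩) := by
  have : OneInfty le2 ∈ {ν : Ordinal | ∀ n : ℕ, ∃ β : Fin n → Ordinal,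
    (∀ i, β i < ν) ∧
    ∀ (i : ℕ) (hi : i + 1 < n), Lt2 le2 (β ⟨i, Nat.lt_of_succ_lt hi⟩) (β ⟨i + 1, hi⟩)} := by
    refine csInf_mem ?_
    obtain ⟨β, hβ⟩ := chain_exists H
    refine ⟨Order.succ (⨆ n, β n), fun n => ⟨fun i => β i, fun i => ?_, fun i _ => hβ i⟩⟩
    exact Order.lt_succ_of_le (Ordinal.le_iSup β i)
  exact this n

end
end Pat
namespace Pat
universe u
section
variable {le1 le2 : Ordinal.{u} → Ordinal.{u} → Prop}

/-- Abstract respecting forests on the natural numbers. -/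
structure Fr (r1 r2 : ℕ → ℕ → Prop) : Prop where
  refl1 : ∀ a, r1 a a
  refl2 : ∀ a, r2 a a
  trans1 : ∀ {a b c}, r1 a b → r1 b c → r1 a c
  trans2 : ∀ {a b c}, r2 a b → r2 b c → r2 a c
  sub0 : ∀ {a b}, r1 a b → a ≤ b
  sub1 : ∀ {a b}, r2 a b → r1 a b
  resp1 : ∀ {a b c}, a ≤ b → b ≤ c → r1 a c → r1 a b
  resp2 : ∀ {a b c}, r1 a b → r1 b c → r2 a c → r2 a b

theorem limit_of (H : IsR2Pair le1 le2) {a b : Ordinal.{u}} (hab : le1 a b) (hlt : a < b) :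
    ∀ x < a, ∃ y < a, x < y := by
  intro x hx
  obtain ⟨y, h1, h2⟩ := L1 H hab (A := Unit) (Y := Unit)
    (qlt (le1 := le1) (le2 := le2) (Sum.inl ()) (Sum.inr ()))
    (fun _ => x) (fun _ => hx) (fun _ => a) (fun _ => hlt) hx
  exact ⟨y (), h1 (), h2⟩

/-- The type conditions. -/
def TP (le1 le2 : Ordinal.{u} → Ordinal.{u} → Prop) (r1 r2 : ℕ → ℕ → Prop) (c j : ℕ)
    (f y : ℕ → Ordinal.{u}) : Prop :=
  (∀ k l, c ≤ k → k < l → l < j → y k < y l) ∧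
  (∀ k l, c ≤ k → k < j → l < j → r1 k l → le1 (y k) (y l) ∧ (r2 k l ↔ le2 (y k) (y l))) ∧
  (∀ a l, a < c → r2 a c → c ≤ l → l < j → (r2 a l ↔ le2 (f a) (y l)))

/-- The matrix of the reflected formula. -/
def Mat (le1 le2 : Ordinal.{u} → Ordinal.{u} → Prop) (r1 r2 : ℕ → ℕ → Prop) (c j : ℕ)
    (g : ((({a : Fin c // r2 a c}) ⊕ Bool) ⊕ Option (Fin j)) → Ordinal.{u}) : Prop :=
  (g (.inl (.inr true)) ≤ g (.inr none) ∧ ¬ le1 (g (.inl (.inr true))) (g (.inr none))) ∨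
  ((∀ k : Fin j, c ≤ k → g (.inl (.inr false)) < g (.inr (some k)) ∧
      le1 (g (.inl (.inr true))) (g (.inr (some k)))) ∧
   (∀ k l : Fin j, c ≤ k → k < l → g (.inr (some k)) < g (.inr (some l))) ∧
   (∀ k l : Fin j, c ≤ k → r1 k l → le1 (g (.inr (some k))) (g (.inr (some l))) ∧
      (r2 k l ↔ le2 (g (.inr (some k))) (g (.inr (some l))))) ∧
   (∀ (a : {a : Fin c // r2 a c}) (l : Fin j), c ≤ l → 
      (r2 a.1 l ↔ le2 (g (.inl (.inl a))) (g (.inr (some l))))))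

theorem qmat (r1 r2 : ℕ → ℕ → Prop) (c j : ℕ) : QFP le1 le2 (Mat le1 le2 r1 r2 c j) := by
  unfold Mat
  refine qor (qand (qle _ _) (qnot (qle1 _ _))) (qand ?_ (qand ?_ (qand ?_ ?_)))
  · exact qall fun k => qimp (qconst _) (qand (qlt _ _) (qle1 _ _))
  · exact qall fun k => qall fun l => qimp (qconst _) (qimp (qconst _) (qlt _ _))
  · exact qall fun k => qall fun l => qimp (qconst _) (qimp (qconst _)
      (qand (qle1 _ _) (qiff (qconst _) (qle2 _ _))))
  · exact qall fun a => qall fun l => qimp (qconst _) (qiff (qconst _) (qle2 _ _))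

theorem key0 (H : IsR2Pair le1 le2) {r1 r2 : ℕ → ℕ → Prop} (G : Fr r1 r2) {c j : ℕ} (hcj : c < j)
    (hc1 : ∀ l, c ≤ l → l < j → r1 c l)
    {P t : Ordinal.{u}} (hPt : le1 P t) (hlt : P < t) (f e : ℕ → Ordinal.{u})
    (hf : ∀ a, a < c → r2 a c → f a < P) (hec : e c = P) (het : ∀ k, c ≤ k → k < j → e k < t)
    (hT : TP le1 le2 r1 r2 c j f e) {b σ ρ : Ordinal.{u}} (hb : le2 P b) (hσρ : σ ≤ ρ) (hρ : ρ < b)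
    (hσ : le1 σ b) : ∃ y, TP le1 le2 r1 r2 c j f y ∧
      ∀ k, c ≤ k → k < j → ρ < y k ∧ le1 σ (y k) ∧ y k < b := by
  have Fa := facts H
  have hlim := limit_of H hPt hlt
  obtain ⟨T1, T2, T3⟩ := hT
  have hPe : ∀ k, c ≤ k → k < j → P ≤ e k := by
    intro k h1 h2
    rcases h1.eq_or_lt with rfl | h1
    · exact hec.ge
    · exact hec.symm.le.trans (T1 c k le_rfl h1 h2).le
  have hA := L2 H hb (qmat r1 r2 c j) (fun a => f a.1) (fun a => hf _ a.1.2 a.2) (by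
    intro w hw
    by_cases hz : ∃ z < P, w true ≤ z ∧ ¬ le1 (w true) z
    · obtain ⟨z, hz, h1, h2⟩ := hz
      exact ⟨fun _ => z, fun _ => hz, Or.inl ⟨h1, h2⟩⟩
    · push Not at hz
      have hp : le1 (w true) P := Fa.lim1 hlim (hw true) (fun z h1 h2 => hz z h2 h1)
      refine L1 H hPt (qmat r1 r2 c j) (Sum.elim (fun a => f a.1) w) ?_
        (fun o => match o with | none => P | some k => e (max k c)) ?_ ?_
      · rintro (a | a)
        · exact hf _ a.1.2 a.2
        · exact hw a
      · rintro (_ | k)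
        · exact hlt
        · exact het _ (le_max_right _ _) (max_lt k.2 hcj)
      · right
        refine ⟨?_, ?_, ?_, ?_⟩
        · intro k hk
          simp only [Sum.elim_inl, Sum.elim_inr, max_eq_left hk]
          refine ⟨(hw false).trans_le (hPe _ hk k.2), Fa.trans1 hp ?_⟩
          rw [← hec]
          exact (T2 c k le_rfl hcj k.2 (hc1 _ hk k.2)).1
        · intro k l hk hkl
          have hl : c ≤ l := hk.trans (Fin.le_def.1 hkl.le)
          simp only [Sum.elim_inl, Sum.elim_inr, max_eq_left hk, max_eq_left hl]
          exact T1 _ _ hk hkl l.2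
        · intro k l hk hkl
          by_cases hl : c ≤ l
          · simp only [Sum.elim_inl, Sum.elim_inr, max_eq_left hk, max_eq_left hl]
            exact T2 _ _ hk k.2 l.2 hkl
          · exact absurd (hk.trans (G.sub0 hkl)) hl
        · intro a l hl
          simp only [Sum.elim_inl, Sum.elim_inr, max_eq_left hl]
          exact T3 _ _ a.1.2 a.2 hl l.2)
  obtain ⟨y, hy, hM⟩ := hA (fun i => if i then σ else ρ) (by
    intro i
    cases i
    · simpa using hρ
    · simpa using hσρ.trans_lt hρ)
  rcases hM with ⟨h1, h2⟩ | ⟨h1, h2, h3, h4⟩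
  · exact absurd (Fa.resp1 h1 (hy _).le hσ) h2
  · refine ⟨fun k => if h : k < j then y (some ⟨k, h⟩) else 0, ⟨?_, ?_, ?_⟩, ?_⟩
    · intro k l hk hkl hl
      have := h2 ⟨k, hkl.trans hl⟩ ⟨l, hl⟩ hk hkl
      simpa [hl, hkl.trans hl] using this
    · intro k l hk hkj hl hkl
      have := h3 ⟨k, hkj⟩ ⟨l, hl⟩ hk hkl
      simpa [hl, hkj] using this
    · intro a l ha hac hl hlj
      have := h4 ⟨⟨a, ha⟩, hac⟩ ⟨l, hlj⟩ hl
      simpa [hlj] using this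
    · intro k hk hkj
      have h5 := h1 ⟨k, hkj⟩ hk
      have h6 := hy (some ⟨k, hkj⟩)
      simp at h5
      simpa [hkj] using ⟨h5.1, h5.2, h6⟩

theorem key1 (H : IsR2Pair le1 le2) {r1 r2 : ℕ → ℕ → Prop} (G : Fr r1 r2) {c j : ℕ} (hcj : c < j)
    (hc1 : ∀ l, c ≤ l → l < j → r1 c l)
    {P t : Ordinal.{u}} (hPt : le1 P t) (hlt : P < t) (f e : ℕ → Ordinal.{u})
    (hf : ∀ a, a < c → r2 a c → f a < P) (hec : e c = P) (het : ∀ k, c ≤ k → k < j → e k < t)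
    (hT : TP le1 le2 r1 r2 c j f e) {b σ ρ : Ordinal.{u}} (hb : le2 P b) (hσρ : σ ≤ ρ) (hρ : ρ < b)
    (hσ : le1 σ b) : ∃ y, TP le1 le2 r1 r2 c j f y ∧
      (∀ k, c ≤ k → k < j → ρ < y k ∧ le1 σ (y k) ∧ y k < b) ∧ ¬ le2 P (y c) := by
  have Fa := facts H
  let S : Set Ordinal.{u} := {o | ∃ y, y c = o ∧ TP le1 le2 r1 r2 c j f y ∧
      (∀ k, c ≤ k → k < j → ρ < y k ∧ le1 σ (y k) ∧ y k < b)}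
  have hS : S.Nonempty := by
    obtain ⟨y, h1, h2⟩ := key0 H G hcj hc1 hPt hlt f e hf hec het hT hb hσρ hρ hσ
    exact ⟨_, y, rfl, h1, h2⟩
  obtain ⟨y, hy, h1, h2⟩ := csInf_mem hS
  refine ⟨y, h1, h2, fun hn => ?_⟩
  have h3 := h2 c le_rfl hcj
  obtain ⟨z, h4, h5⟩ := key0 H G hcj hc1 hPt hlt f e hf hec het hT hn hσρ h3.1 h3.2.1
  have h6 : z c ∈ S := ⟨z, rfl, h4, fun k hk hkj =>
    ⟨(h5 k hk hkj).1, (h5 k hk hkj).2.1, (h5 k hk hkj).2.2.trans h3.2.2⟩⟩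
  have h7 := csInf_le' h6
  rw [← hy] at h7
  exact absurd (h5 c le_rfl hcj).2.2 (not_lt.2 h7)

end
end Pat
namespace Pat
universe u
section
variable {le1 le2 : Ordinal.{u} → Ordinal.{u} → Prop}

theorem chain_le (Fa : Facts le1 le2) {τ : ℕ → Ordinal.{u}} {N : ℕ}
    (hτ : ∀ n < N, Lt2 le2 (τ n) (τ (n+1))) : ∀ n m, m ≤ n → n ≤ N → le2 (τ m) (τ n) := by
  intro n
  induction n with
  | zero =>
    intro m h _
    obtain rfl : m = 0 := by omega
    exact Fa.refl2 _
  | succ n ih =>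
    intro m h h2
    rcases h.eq_or_lt with rfl | h
    · exact Fa.refl2 _
    · exact Fa.trans2 (ih m (by omega) (by omega)) (hτ n (by omega)).1

theorem Fr.r2down {r1 r2 : ℕ → ℕ → Prop} (G : Fr r1 r2) {a b i : ℕ} (ha : r2 a i) (hb : r2 b i)
    (hab : a ≤ b) : r2 a b :=
  G.resp2 (G.resp1 hab (G.sub0 (G.sub1 hb)) (G.sub1 ha)) (G.sub1 hb) ha

/-- The construction claim. -/
def Cl (le1 le2 : Ordinal.{u} → Ordinal.{u} → Prop) (r1 r2 : ℕ → ℕ → Prop) (i j N : ℕ) : Prop :=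
  ∀ f τ : ℕ → Ordinal.{u}, τ 0 = f i → (∀ n < N, Lt2 le2 (τ n) (τ (n+1))) →
    (∀ a b, r2 a b → r2 b i → le2 (f a) (f b) ∧ (a < b → f a < f b)) →
    ∃ e : ℕ → Ordinal.{u}, (∀ a, r2 a i → e a = f a) ∧ (∀ k, i ≤ k → k < j → e k < τ N) ∧
      (∀ k l, i ≤ k → k < l → l < j → e k < e l) ∧
      (∀ k l, i ≤ l → l < j → r1 k l → (i ≤ k ∨ r2 k i) →
        le1 (e k) (e l) ∧ (r2 k l ↔ le2 (e k) (e l)))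

theorem claimA (H : IsR2Pair le1 le2) {r1 r2 : ℕ → ℕ → Prop} (G : Fr r1 r2) :
    ∀ d i j, j - i = d → i < j → (∀ k, i ≤ k → k < j → r1 i k) → ∃ N, Cl le1 le2 r1 r2 i j N := by
  have Fa := facts H
  intro d
  induction d using Nat.strong_induction_on with
  | _ d ih =>
  intro i j hd hij hi
  rcases Nat.eq_or_lt_of_le (Nat.succ_le_of_lt hij) with hj | hj
  · refine ⟨1, fun f τ h0 hτ hf => ⟨f, fun _ _ => rfl, ?_, ?_, ?_⟩⟩
    · intro k h1 h2
      obtain rfl : k = i := by omega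
      rw [← h0]
      exact lt_of_le_of_ne (Fa.sub0 (Fa.sub1 (hτ 0 (by omega)).1)) (hτ 0 (by omega)).2
    · intro k l h1 h2 h3
      omega
    · intro k l h1 h2 h3 h4
      obtain rfl : l = i := by omega
      have h5 : r2 k l := by
        rcases h4 with h4 | h4
        · have := G.sub0 h3
          obtain rfl : k = l := by omega
          exact G.refl2 _
        · exact h4
      have h6 := (hf k l h5 (G.refl2 _)).1
      exact ⟨Fa.sub1 h6, fun _ => h6, fun _ => h5⟩
  have hex : ∃ c, i < c ∧ r1 c (j-1) := ⟨j-1, by omega, G.refl1 _⟩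
  classical
  obtain ⟨c, ⟨hic, hcj1⟩, hmin⟩ : ∃ c, (i < c ∧ r1 c (j-1)) ∧ ∀ q < c, ¬ (i < q ∧ r1 q (j-1)) :=
    ⟨Nat.find hex, Nat.find_spec hex, fun q hq => Nat.find_min hex hq⟩
  have hcj : c < j := by have := G.sub0 hcj1; omega
  have hc1 : ∀ l, c ≤ l → l < j → r1 c l := fun l h1 h2 => G.resp1 h1 (by omega) hcj1
  have hq : ∀ q l, i < q → q < c → c ≤ l → l < j → ¬ r1 q l := by
    intro q l h1 h2 h3 h4 h5
    exact hmin q h2 ⟨h1, G.trans1 (G.resp1 h2.le h3 h5) hcj1⟩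
  have hst : ∀ a, a < c → r2 a c → r2 a i := by
    intro a h1 h2
    have h3 : a ≤ i := by
      by_contra h
      exact hq a c (by omega) h1 le_rfl hcj (G.sub1 h2)
    exact G.resp2 (G.resp1 h3 hic.le (G.sub1 h2)) (hi c hic.le hcj) h2
  have hki : ∀ k l, c ≤ l → l < j → k < c → r1 k l → (i ≤ k ∨ r2 k i) → r2 k i := by
    intro k l h1 h2 h3 h4 h5
    rcases h5 with h5 | h5
    · rcases h5.eq_or_lt with rfl | h5
      · exact G.refl2 _
      · exact absurd h4 (hq k l h5 h3 h1 h2)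
    · exact h5
  obtain ⟨N1, hN1⟩ := ih (c - i) (by omega) i c rfl hic (fun k h1 h2 => hi k h1 (by omega))
  obtain ⟨N2, hN2⟩ := ih (j - c) (by omega) c j rfl hcj hc1
  refine ⟨N1 + N2, fun f τ h0 hτ hf => ?_⟩
  have hch := chain_le Fa hτ
  obtain ⟨e1, ea, eb, ec, ed⟩ := hN1 f τ h0 (fun n hn => hτ n (by omega)) hf
  have h0N1 : τ 0 < τ N1 := by
    have := eb i le_rfl hic
    rwa [ea i (G.refl2 _), ← h0] at this
  have hNle : τ N1 ≤ τ (N1 + N2) := Fa.sub0 (Fa.sub1 (hch _ _ (by omega) le_rfl))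
  by_cases hicr : r2 i c
  · obtain ⟨e2, ga, gb, gc, gd⟩ := hN2 (fun a => if a = c then τ N1 else f a) (fun n => τ (N1 + n))
      (by simp) (fun n hn => hτ (N1 + n) (by omega)) (by
        intro a b hab hbc
        by_cases hb : b = c
        · subst hb
          by_cases ha : a = b
          · subst ha
            exact ⟨Fa.refl2 _, fun h => absurd h (lt_irrefl _)⟩
          · have hlt : a < b := lt_of_le_of_ne (G.sub0 (G.sub1 hab)) ha
            have h1 := hf a i (hst a hlt hab) (G.refl2 _)
            simp only [ha, if_true, if_false]
            have h2 : le2 (f a) (τ 0) := by rw [h0]; exact h1.1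
            exact ⟨Fa.trans2 h2 (hch _ _ (by omega) (by omega)),
              fun _ => (Fa.sub0 (Fa.sub1 h2)).trans_lt h0N1⟩
        · have h1 : b < c := lt_of_le_of_ne (G.sub0 (G.sub1 hbc)) hb
          have h2 : a ≤ b := G.sub0 (G.sub1 hab)
          have ha : a ≠ c := by omega
          simp only [ha, hb, if_false]
          exact hf a b hab (hst b h1 hbc))
    have hg : e2 c = τ N1 := by rw [ga c (G.refl2 _)]; simp
    refine ⟨fun k => if k < c then e1 k else e2 k, ?_, ?_, ?_, ?_⟩
    · intro a ha
      have h1 : a ≤ i := G.sub0 (G.sub1 ha)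
      have h2 : a < c := by omega
      simp only [h2, if_true]
      exact ea a ha
    · intro k h1 h2
      by_cases hk : k < c
      · simp only [hk, if_true]
        exact (eb k h1 hk).trans_le hNle
      · simp only [hk, if_false]
        exact gb k (by omega) h2
    · intro k l h1 h2 h3
      by_cases hl : l < c
      · have hk : k < c := by omega
        simp only [hk, hl, if_true]
        exact ec k l h1 h2 hl
      · by_cases hk : k < c
        · simp only [hk, hl, if_true, if_false]
          have h4 : e2 c ≤ e2 l := by
            rcases (not_lt.1 hl).eq_or_lt with rfl | h5
            · exact le_rfl
            · exact (gc c l le_rfl h5 h3).le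
          exact (eb k h1 hk).trans_le (hg ▸ h4)
        · simp only [hk, hl, if_false]
          exact gc k l (by omega) h2 h3
    · intro k l h1 h2 h3 h4
      have h5 := G.sub0 h3
      by_cases hl : l < c
      · have hk : k < c := by omega
        simp only [hk, hl, if_true]
        exact ed k l h1 hl h3 h4
      · by_cases hk : k < c
        · simp only [hk, hl, if_true, if_false]
          have h6 := hki k l (by omega) h2 hk h3 h4
          have h7 := G.trans2 h6 hicr
          have h8 := gd k l (by omega) h2 h3 (Or.inr h7)
          rw [ga k h7] at h8
          simp only [hk.ne, if_false] at h8
          rw [ea k h6]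
          exact h8
        · simp only [hk, hl, if_false]
          exact gd k l (by omega) h2 h3 (Or.inl (by omega))
  · have hpex : ∃ b, r2 b i ∧ ¬ r2 b c := ⟨i, G.refl2 _, hicr⟩
    obtain ⟨π, ⟨hπi, hπc⟩, hπmin⟩ : ∃ c', (r2 c' i ∧ ¬ r2 c' c) ∧ ∀ q < c', ¬ (r2 q i ∧ ¬ r2 q c) :=
      ⟨Nat.find hpex, Nat.find_spec hpex, fun q hq => Nat.find_min hpex hq⟩
    have hsp : ∀ a, a < c → r2 a c → a < π ∧ r2 a π := by
      intro a h1 h2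
      have h3 := hst a h1 h2
      have h4 : a < π := by
        by_contra h
        exact hπc (G.trans2 (G.r2down hπi h3 (by omega)) h2)
      exact ⟨h4, G.r2down h3 hπi h4.le⟩
    have hπ0 : le2 (f π) (τ 0) := by
      rw [h0]
      exact (hf π i hπi (G.refl2 _)).1
    have hπl : f π ≤ τ 0 := Fa.sub0 (Fa.sub1 hπ0)
    obtain ⟨e2, ga, gb, gc, gd⟩ := hN2 (fun a => if a = c then f π else f a)
      (fun n => if n = 0 then f π else τ n)
      (by simp) (by
        intro n hn
        by_cases h : n = 0
        · subst h
          simp only [if_true]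
          have h1 := hτ 0 (by omega)
          refine ⟨by simpa using Fa.trans2 hπ0 h1.1, ?_⟩
          have h2 := lt_of_le_of_ne (Fa.sub0 (Fa.sub1 h1.1)) h1.2
          simpa using (hπl.trans_lt h2).ne
        · simpa [h] using hτ n (by omega)) (by
        intro a b hab hbc
        by_cases hb : b = c
        · subst hb
          by_cases ha : a = b
          · subst ha
            exact ⟨Fa.refl2 _, fun h => absurd h (lt_irrefl _)⟩
          · have hlt : a < b := lt_of_le_of_ne (G.sub0 (G.sub1 hab)) ha
            have h1 := hsp a hlt hab
            simp only [ha, if_true, if_false]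
            have h2 := hf a π h1.2 hπi
            exact ⟨h2.1, fun _ => h2.2 h1.1⟩
        · have h1 : b < c := lt_of_le_of_ne (G.sub0 (G.sub1 hbc)) hb
          have h2 : a ≤ b := G.sub0 (G.sub1 hab)
          have ha : a ≠ c := by omega
          simp only [ha, hb, if_false]
          exact hf a b hab (hst b h1 hbc))
    have hg : e2 c = f π := by rw [ga c (G.refl2 _)]; simp
    have hN20 : N2 ≠ 0 := by
      rintro rfl
      have := gb c le_rfl hcj
      rw [hg] at this
      simp at this
    simp only [hN20, if_false] at gb
    have hPlt : f π < τ N2 := by rw [← hg]; exact gb c le_rfl hcj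
    have hPt : le1 (f π) (τ N2) := Fa.sub1 (Fa.trans2 hπ0 (hch _ _ (by omega) (by omega)))
    have hPb : le2 (f π) (τ N1) := Fa.trans2 hπ0 (hch _ _ (by omega) (by omega))
    have hσb : le1 (f i) (τ N1) := by
      rw [← h0]
      exact Fa.sub1 (hch _ _ (by omega) (by omega))
    have he1 : ∀ k, i ≤ k → k < c → e1 k ≤ e1 (c-1) := by
      intro k h1 h2
      rcases Nat.eq_or_lt_of_le (show k ≤ c - 1 by omega) with rfl | h3
      · exact le_rfl
      · exact (ec k (c-1) h1 h3 (by omega)).le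
    have hσρ : f i ≤ e1 (c-1) := by
      rw [← ea i (G.refl2 _)]
      exact he1 i le_rfl hic
    obtain ⟨y, ⟨T1, T2, T3⟩, hy, hyn⟩ := key1 H G hcj hc1 hPt hPlt f e2
      (fun a h1 h2 => (hf a π (hsp a h1 h2).2 hπi).2 (hsp a h1 h2).1) hg gb
      ⟨gc, fun k l h1 h2 h3 h4 => gd k l (h1.trans (G.sub0 h4)) h3 h4 (Or.inl h1), by
        intro a l h1 h2 h3 h4
        have h5 := (gd a l h3 h4 (G.trans1 (G.sub1 h2) (hc1 l h3 h4)) (Or.inr h2)).2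
        rw [ga a h2] at h5
        simpa only [h1.ne, if_false] using h5⟩ hPb hσρ (eb (c-1) (by omega) (by omega)) hσb
    refine ⟨fun k => if k < c then e1 k else y k, ?_, ?_, ?_, ?_⟩
    · intro a ha
      have h1 : a ≤ i := G.sub0 (G.sub1 ha)
      have h2 : a < c := by omega
      simp only [h2, if_true]
      exact ea a ha
    · intro k h1 h2
      by_cases hk : k < c
      · simp only [hk, if_true]
        exact (eb k h1 hk).trans_le hNle
      · simp only [hk, if_false]
        exact (hy k (by omega) h2).2.2.trans_le hNle
    · intro k l h1 h2 h3
      by_cases hl : l < c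
      · have hk : k < c := by omega
        simp only [hk, hl, if_true]
        exact ec k l h1 h2 hl
      · by_cases hk : k < c
        · simp only [hk, hl, if_true, if_false]
          exact (he1 k h1 hk).trans_lt (hy l (by omega) h3).1
        · simp only [hk, hl, if_false]
          exact T1 k l (by omega) h2 h3
    · intro k l h1 h2 h3 h4
      have h5 := G.sub0 h3
      by_cases hl : l < c
      · have hk : k < c := by omega
        simp only [hk, hl, if_true]
        exact ed k l h1 hl h3 h4
      · have hl' : c ≤ l := by omega
        by_cases hk : k < c
        · simp only [hk, hl, if_true, if_false]
          have h6 := hki k l hl' h2 hk h3 h4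
          rw [ea k h6]
          refine ⟨Fa.trans1 (Fa.sub1 (hf k i h6 (G.refl2 _)).1) (hy l hl' h2).2.1, ?_⟩
          by_cases hkc : r2 k c
          · exact T3 k l hk hkc hl' h2
          · refine ⟨fun h => ?_, fun h => ?_⟩
            · exact absurd (G.resp2 (G.resp1 hk.le hl' h3) (hc1 l hl' h2) h) hkc
            · exfalso
              have h7 : π ≤ k := by
                by_contra h8
                exact hπmin k (by omega) ⟨h6, hkc⟩
              have h8 : le2 (f π) (y l) := Fa.trans2 (hf π k (G.r2down hπi h6 h7) h6).1 h
              have h9 : f π ≤ y c := by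
                refine (hπl.trans (h0.le.trans hσρ)).trans (hy c le_rfl hcj).1.le
              have h10 := (T2 c l le_rfl hcj h2 (hc1 l hl' h2)).1
              exact hyn (Fa.resp2 (Fa.resp1 h9 (Fa.sub0 h10) (Fa.sub1 h8)) h10 h8)
        · simp only [hk, hl, if_false]
          exact T2 k l (by omega) (by omega) h2 h3

/-- Approximate realizations. -/
def AR (le1 le2 : Ordinal.{u} → Ordinal.{u} → Prop) (r1 r2 : ℕ → ℕ → Prop) (m : ℕ)
    (x : Fin (m+1) → Ordinal.{u}) : Prop :=
  (∀ k, x k < OneInfty le2) ∧ (∀ k l, k < l → x k < x l) ∧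
  ∀ k l : Fin (m+1), r1 k l → le1 (x k) (x l) ∧ (r2 k l ↔ le2 (x k) (x l))

theorem ar_exists (H : IsR2Pair le1 le2) {r1 r2 : ℕ → ℕ → Prop} (G : Fr r1 r2) (m : ℕ)
    (h0 : ∀ k, k ≤ m → r1 0 k) : ∃ x, AR le1 le2 r1 r2 m x := by
  have Fa := facts H
  obtain ⟨N, hN⟩ := claimA H G (m+1) 0 (m+1) rfl (by omega) (fun k _ h => h0 k (by omega))
  obtain ⟨β, hβ1, hβ2⟩ := oneInfty_chain H (N+1)
  obtain ⟨e, _, eb, ec, ed⟩ := hN (fun _ => β 0) (fun n => if h : n < N + 1 then β ⟨n, h⟩ else 0)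
    (by simp) (by
      intro n hn
      have := hβ2 n (by omega)
      simpa [hn, hn.trans (Nat.lt_succ_self N)] using this) (by
      intro a b h1 h2
      have h3 := G.sub0 (G.sub1 h1)
      have h4 := G.sub0 (G.sub1 h2)
      exact ⟨Fa.refl2 _, fun h => by omega⟩)
  refine ⟨fun k => e k, fun k => ?_, fun k l h => ?_, fun k l h => ?_⟩
  · have := eb k (by omega) k.2
    simp at this
    exact this.trans (hβ1 _)
  · exact ec k l (by omega) h l.2
  · exact ed k l (by omega) l.2 h (Or.inl (by omega))

theorem exact_exists (H : IsR2Pair le1 le2) {r1 r2 : ℕ → ℕ → Prop} (G : Fr r1 r2) (m : ℕ)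
    (h0 : ∀ k, k ≤ m → r1 0 k) : ∃ x, AR le1 le2 r1 r2 m x ∧
      ∀ k l : Fin (m+1), le1 (x k) (x l) → r1 k l := by
  classical
  have Fa := facts H
  have wf : WellFounded ((· < ·) : (Fin (m+1) → Ordinal.{u}) → (Fin (m+1) → Ordinal.{u}) → Prop) :=
    wellFounded_lt
  obtain ⟨x, hx, hmin⟩ := wf.has_min {x | AR le1 le2 r1 r2 m x} (ar_exists H G m h0)
  refine ⟨x, hx, ?_⟩
  intro k l hkl
  by_contra hr
  obtain ⟨hx1, hx2, hx3⟩ := hx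
  have hmono : StrictMono x := fun a b h => hx2 a b h
  have hkl' : k < l := by
    have h1 : k ≤ l := hmono.le_iff_le.1 (Fa.sub0 hkl)
    refine lt_of_le_of_ne h1 ?_
    rintro rfl
    exact hr (G.refl1 _)
  obtain ⟨j, ⟨hj1, hj2⟩, hj3⟩ := (wellFounded_lt (α := Fin (m+1))).has_min
    {n : Fin (m+1) | k < n ∧ ¬ r1 k n} ⟨l, hkl', hr⟩
  have hjl : j ≤ l := not_lt.1 (hj3 l ⟨hkl', hr⟩)
  have hkj : le1 (x k) (x j) := Fa.resp1 (hmono.monotone hj1.le) (hmono.monotone hjl) hkl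
  have hkn : ∀ n : Fin (m+1), k ≤ n → n < j → r1 k n := by
    intro n h1 h2
    rcases h1.eq_or_lt with rfl | h1
    · exact G.refl1 _
    · by_contra h
      exact hj3 n ⟨h1, h⟩ h2
  have hk0 : 0 < x k := by
    have : (0 : Fin (m+1)) < k := by
      by_contra h
      have : k = 0 := by simpa using h
      subst this
      exact hj2 (h0 j (by omega))
    exact lt_of_le_of_lt zero_le (hmono this)
  let ix : Fin (m+1) → Fin (m+1) ⊕ Fin (m+1) := fun a => if a < k then Sum.inl a else Sum.inr a
  let v : Fin (m+1) → Ordinal.{u} := fun a => if a < k then x a else 0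
  let y : Fin (m+1) → Ordinal.{u} := fun a => if a < j then x a else 0
  have hvy : ∀ a, a < j → Sum.elim v y (ix a) = x a := by
    intro a ha
    by_cases h : a < k <;> simp [ix, v, y, h, ha]
  obtain ⟨y', hy1, hy2⟩ := L1 H hkj (A := Fin (m+1)) (Y := Fin (m+1))
    (R := fun g => ∀ a b : Fin (m+1), a < j → b < j → (a < b → g (ix a) < g (ix b)) ∧
      (r1 a b → le1 (g (ix a)) (g (ix b)) ∧ (r2 a b ↔ le2 (g (ix a)) (g (ix b)))))
    (qall fun a => qall fun b => qimp (qconst _) (qimp (qconst _) (qand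
      (qimp (qconst _) (qlt _ _)) (qimp (qconst _) (qand (qle1 _ _) (qiff (qconst _) (qle2 _ _)))))))
    v (by
      intro i
      by_cases h : i < k
      · simpa [v, h] using hmono h
      · simpa [v, h] using hk0) y (by
      intro i
      by_cases h : i < j
      · simpa [y, h] using hmono h
      · simpa [y, h] using hk0.trans (hmono hj1)) (by
      intro a b ha hb
      rw [hvy a ha, hvy b hb]
      exact ⟨hx2 a b, hx3 a b⟩)
  let x' : Fin (m+1) → Ordinal.{u} := fun a => if a < k then x a else if a < j then y' a else x a
  have hx' : ∀ a, a < j → Sum.elim v y' (ix a) = x' a := by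
    intro a ha
    by_cases h : a < k <;> simp [ix, v, x', h, ha]
  have hxj : ∀ a, j ≤ a → x' a = x a := by
    intro a ha
    simp [x', not_lt.2 ha]
  have hxk : ∀ a, a < k → x' a = x a := by
    intro a ha
    simp [x', ha]
  have hxm : ∀ a, k ≤ a → a < j → x' a < x k := by
    intro a ha haj
    simpa [x', haj, not_lt.2 ha] using hy1 a
  have hle : ∀ a, x' a ≤ x a := by
    intro a
    by_cases h1 : a < k
    · exact (hxk a h1).le
    · by_cases h2 : a < j
      · exact (hxm a (not_lt.1 h1) h2).le.trans (hmono.monotone (not_lt.1 h1))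
      · exact (hxj a (not_lt.1 h2)).le
  refine hmin x' ⟨?_, ?_, ?_⟩ ?_
  · exact fun a => (hle a).trans_lt (hx1 a)
  · intro a b hab
    by_cases hb : b < j
    · have := (hy2 a b (hab.trans hb) hb).1 hab
      rwa [hx' a (hab.trans hb), hx' b hb] at this
    · rw [hxj b (not_lt.1 hb)]
      exact (hle a).trans_lt (hmono hab)
  · intro a b hab
    have hab' : a ≤ b := Fin.le_def.2 (G.sub0 hab)
    by_cases hb : b < j
    · have := (hy2 a b (hab'.trans_lt hb) hb).2 hab
      rwa [hx' a (hab'.trans_lt hb), hx' b hb] at this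
    · have hb := not_lt.1 hb
      rw [hxj b hb]
      by_cases ha : a < k
      · rw [hxk a ha]
        exact hx3 a b hab
      · by_cases ha2 : a < j
        · exact absurd (G.trans1 (hkn a (not_lt.1 ha) ha2) (G.resp1 ha2.le hb hab)) hj2
        · rw [hxj a (not_lt.1 ha2)]
          exact hx3 a b hab
  · exact Pi.lt_def.2 ⟨hle, k, hxm k le_rfl hj1⟩

end
end Pat

theorem stmt2 (le1 le2 : Ordinal → Ordinal → Prop) (h : IsR2Pair le1 le2) (F : RForest) :
    ∃ c : F.P → Ordinal,
      IsCovering le1 le2 F c ∧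
      (∀ p q : F.P, (F.le0 p q ↔ c p ≤ c q) ∧ (F.le1 p q ↔ le1 (c p) (c q)) ∧
        (F.le2 p q ↔ le2 (c p) (c q))) ∧
      ∀ p, c p < OneInfty le2 := by
  classical
  have Fa := Pat.facts h
  let _ : LinearOrder F.P :=
    { le := F.le0
      le_refl := F.le0_refl
      le_trans := F.le0_trans
      le_antisymm := F.le0_antisymm
      le_total := F.le0_total
      toDecidableLE := Classical.decRel _ }
  have hle : ∀ p q : F.P, F.le0 p q ↔ p ≤ q := fun _ _ => Iff.rfl
  obtain ⟨m, hm⟩ : ∃ m, Fintype.card F.P = m := ⟨_, rfl⟩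
  have id : F.P ≃o Fin m := (Fintype.orderIsoFinOfCardEq F.P hm).symm
  have hid : ∀ p q, F.le0 p q ↔ (id p : ℕ) ≤ id q := fun p q =>
    (hle p q).trans (id.le_iff_le.symm.trans Fin.le_def)
  have inj : ∀ p q, (id p : ℕ) = id q → p = q := fun p q hpq => id.injective (Fin.ext hpq)
  let r1 : ℕ → ℕ → Prop := fun x y => x = y ∨ x = 0 ∨
    ∃ p q, (id p : ℕ) + 1 = x ∧ (id q : ℕ) + 1 = y ∧ F.le1 p q
  let r2 : ℕ → ℕ → Prop := fun x y => x = y ∨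
    ∃ p q, (id p : ℕ) + 1 = x ∧ (id q : ℕ) + 1 = y ∧ F.le2 p q
  have hr1 : ∀ p q, r1 (id p + 1) (id q + 1) ↔ F.le1 p q := by
    intro p q
    constructor
    · rintro (h | h | ⟨p', q', h1, h2, h3⟩)
      · obtain rfl := inj p q (by omega)
        exact F.le1_refl _
      · omega
      · obtain rfl := inj p' p (by omega)
        obtain rfl := inj q' q (by omega)
        exact h3
    · exact fun h => Or.inr (Or.inr ⟨p, q, rfl, rfl, h⟩)
  have hr2 : ∀ p q, r2 (id p + 1) (id q + 1) ↔ F.le2 p q := by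
    intro p q
    constructor
    · rintro (h | ⟨p', q', h1, h2, h3⟩)
      · obtain rfl := inj p q (by omega)
        exact F.le2_refl _
      · obtain rfl := inj p' p (by omega)
        obtain rfl := inj q' q (by omega)
        exact h3
    · exact fun h => Or.inr ⟨p, q, rfl, rfl, h⟩
  have sub0 : ∀ {a b}, r1 a b → a ≤ b := by
    rintro a b (h | h | ⟨p, q, rfl, rfl, h⟩)
    · omega
    · omega
    · have := (hid p q).1 (F.le1_sub_le0 _ _ h)
      omega
  have G : Pat.Fr r1 r2 :=
    { refl1 := fun a => Or.inl rfl
      refl2 := fun a => Or.inl rfl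
      trans1 := by
        rintro a b c (rfl | rfl | ⟨p, q, rfl, rfl, h1⟩) h2
        · exact h2
        · exact Or.inr (Or.inl rfl)
        · rcases h2 with rfl | h2 | ⟨p', q', h3, rfl, h2⟩
          · exact (hr1 _ _).2 h1
          · omega
          · obtain rfl := inj p' q (by omega)
            exact (hr1 _ _).2 (F.le1_trans _ _ _ h1 h2)
      trans2 := by
        rintro a b c (rfl | ⟨p, q, rfl, rfl, h1⟩) h2
        · exact h2
        · rcases h2 with rfl | ⟨p', q', h3, rfl, h2⟩
          · exact (hr2 _ _).2 h1
          · obtain rfl := inj p' q (by omega)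
            exact (hr2 _ _).2 (F.le2_trans _ _ _ h1 h2)
      sub0 := sub0
      sub1 := by
        rintro a b (rfl | ⟨p, q, rfl, rfl, h1⟩)
        · exact Or.inl rfl
        · exact (hr1 _ _).2 (F.le2_sub_le1 _ _ h1)
      resp1 := by
        rintro a b c hab hbc (rfl | rfl | ⟨p, q, rfl, rfl, h1⟩)
        · exact Or.inl (by omega)
        · exact Or.inr (Or.inl rfl)
        · have hb : b - 1 < m := by have := (id q).2; omega
          obtain ⟨t, ht⟩ := id.surjective ⟨b - 1, hb⟩
          have ht' : (id t : ℕ) + 1 = b := by rw [ht]; simp; omega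
          subst ht'
          refine (hr1 _ _).2 (F.respects1 p t q ((hid _ _).2 (by omega)) ((hid _ _).2 (by omega)) h1)
      resp2 := by
        rintro a b c hab hbc (rfl | ⟨p, q, rfl, rfl, h1⟩)
        · have h1 := sub0 hab
          have h2 := sub0 hbc
          exact Or.inl (by omega)
        · rcases hab with h2 | h2 | ⟨p', t, h3, rfl, h2⟩
          · exact Or.inl h2
          · omega
          · obtain rfl := inj p' p (by omega)
            exact (hr2 _ _).2 (F.respects2 _ t q h2 ((hr1 _ _).1 hbc) h1) }
  obtain ⟨x, ⟨hx1, hx2, hx3⟩, hx4⟩ := Pat.exact_exists h G m (fun k _ => Or.inr (Or.inl rfl))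
  have hmono : StrictMono x := fun a b h => hx2 a b h
  have key : ∀ p q : F.P, (F.le0 p q ↔ x (id p).succ ≤ x (id q).succ) ∧
      (F.le1 p q ↔ le1 (x (id p).succ) (x (id q).succ)) ∧
      (F.le2 p q ↔ le2 (x (id p).succ) (x (id q).succ)) := by
    intro p q
    have e1 : F.le1 p q ↔ le1 (x (id p).succ) (x (id q).succ) := by
      rw [← hr1]
      exact ⟨fun hh => (hx3 (id p).succ (id q).succ hh).1, fun hh => hx4 (id p).succ (id q).succ hh⟩
    refine ⟨?_, e1, ?_⟩
    · rw [hmono.le_iff_le, Fin.succ_le_succ_iff, hid, Fin.le_def]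
    · constructor
      · intro hh
        have h1 := (hr1 p q).2 (F.le2_sub_le1 _ _ hh)
        exact (hx3 (id p).succ (id q).succ h1).2.1 ((hr2 p q).2 hh)
      · intro hh
        have h1 := (hr1 p q).2 (e1.2 (Fa.sub1 hh))
        exact (hr2 p q).1 ((hx3 (id p).succ (id q).succ h1).2.2 hh)
  exact ⟨fun p => x (id p).succ, ⟨fun p q => (key p q).1, fun p q => (key p q).2.1.1,
    fun p q => (key p q).2.2.1⟩, key, fun p => hx1 _⟩
end

section
/- For every finite set X of ordinals, the structure (X; ≤, ≤₁, ≤₂) with the relations induced from ℛ₂ is a respecting forest of order 2. -/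
open FirstOrder

section Helpers

open FirstOrder.Language

/-- Inclusion of segments. -/
def segIncl {a b : Ordinal} (hab : a ≤ b) (x : {x : Ordinal // x < a}) : {x : Ordinal // x < b} :=
  ⟨x.1, lt_of_lt_of_le x.2 hab⟩

/-- Realization of a bounded formula in a segment. -/
def RealB (le1 le2 : Ordinal → Ordinal → Prop) (β : Ordinal) {k n : ℕ}
    (φ : ordLang.BoundedFormula (Fin k) n) (v : Fin k → {x : Ordinal // x < β})
    (xs : Fin n → {x : Ordinal // x < β}) : Prop :=
  letI := segStr le1 le2 β
  φ.Realize v xs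

theorem realizeIn_iff (le1 le2 : Ordinal → Ordinal → Prop) (β : Ordinal) {k : ℕ}
    (φ : ordLang.Formula (Fin k)) (v : Fin k → {x : Ordinal // x < β})
    (xs : Fin 0 → {x : Ordinal // x < β}) :
    RealizeIn le1 le2 β φ v ↔ RealB le1 le2 β (n := 0) φ v xs := by
  rw [Subsingleton.elim xs default]; rfl

theorem term_eq_var {α : Type} (t : ordLang.Term α) : ∃ i, t = Term.var i := by
  cases t with
  | var i => exact ⟨i, rfl⟩
  | func f _ => exact Empty.elim f

theorem sumElim_segIncl {a b : Ordinal} (hab : a ≤ b) {k n : ℕ}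
    (v : Fin k → {x : Ordinal // x < a}) (xs : Fin n → {x : Ordinal // x < a}) (i : Fin k ⊕ Fin n) :
    Sum.elim (segIncl hab ∘ v) (segIncl hab ∘ xs) i = segIncl hab (Sum.elim v xs i) := by
  cases i <;> rfl

theorem qf_abs (le1 le2 : Ordinal → Ordinal → Prop) {a b : Ordinal} (hab : a ≤ b) {k n : ℕ}
    {φ : ordLang.BoundedFormula (Fin k) n} (h : φ.IsQF)
    (v : Fin k → {x : Ordinal // x < a}) (xs : Fin n → {x : Ordinal // x < a}) :
    RealB le1 le2 a φ v xs ↔ RealB le1 le2 b φ (segIncl hab ∘ v) (segIncl hab ∘ xs) := by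
  induction h with
  | falsum => exact Iff.rfl
  | of_isAtomic h =>
    cases h with
    | equal t₁ t₂ =>
      obtain ⟨i, rfl⟩ := term_eq_var t₁
      obtain ⟨j, rfl⟩ := term_eq_var t₂
      simp only [RealB, BoundedFormula.realize_bdEqual, Term.realize_var, sumElim_segIncl]
      simp [segIncl, Subtype.ext_iff]
    | rel R ts =>
      choose f hf using fun i => term_eq_var (ts i)
      obtain rfl : ts = fun i => Term.var (f i) := funext hf
      simp only [RealB, BoundedFormula.realize_rel, Term.realize_var, sumElim_segIncl]
      cases R <;> exact Iff.rfl
  | imp _ _ ih₁ ih₂ =>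
    simp only [RealB, BoundedFormula.realize_imp] at *
    rw [ih₁, ih₂]

theorem segIncl_snoc {a b : Ordinal} (hab : a ≤ b) {n : ℕ}
    (xs : Fin n → {x : Ordinal // x < a}) (x : {x : Ordinal // x < a}) :
    segIncl hab ∘ (Fin.snoc xs x : Fin (n + 1) → _) = Fin.snoc (segIncl hab ∘ xs) (segIncl hab x) :=
  Fin.comp_snoc _ _ _

theorem realB_ex {le1 le2 : Ordinal → Ordinal → Prop} {a : Ordinal} {k n : ℕ}
    {φ : ordLang.BoundedFormula (Fin k) (n + 1)}
    {v : Fin k → {x : Ordinal // x < a}} {xs : Fin n → {x : Ordinal // x < a}} :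
    RealB le1 le2 a φ.ex v xs ↔ ∃ x, RealB le1 le2 a φ v (Fin.snoc xs x) := by
  simp only [RealB, BoundedFormula.realize_ex]

theorem sigma1_up (le1 le2 : Ordinal → Ordinal → Prop) {a b : Ordinal} (hab : a ≤ b) {k n : ℕ}
    {φ : ordLang.BoundedFormula (Fin k) n} (h : IsSigma1 φ)
    (v : Fin k → {x : Ordinal // x < a}) (xs : Fin n → {x : Ordinal // x < a}) 
    (hr : RealB le1 le2 a φ v xs) : RealB le1 le2 b φ (segIncl hab ∘ v) (segIncl hab ∘ xs) := by
  induction h with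
  | of_isQF h => exact (qf_abs le1 le2 hab h v xs).1 hr
  | ex h ih =>
    obtain ⟨x, hx⟩ := realB_ex.1 hr
    refine realB_ex.2 ⟨segIncl hab x, ?_⟩
    rw [← segIncl_snoc]
    exact ih _ hx

theorem qf_subst {k n : ℕ} {φ : ordLang.BoundedFormula (Fin k) n} (h : φ.IsQF)
    {k' m : ℕ} (e : Fin k ⊕ Fin n → Fin k' ⊕ Fin m) :
    ∃ ψ : ordLang.BoundedFormula (Fin k') m, ψ.IsQF ∧
      ∀ (le1 le2 : Ordinal → Ordinal → Prop) (a : Ordinal) (w : Fin k' → {x : Ordinal // x < a})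
        (ys : Fin m → {x : Ordinal // x < a}),
        RealB le1 le2 a ψ w ys ↔ RealB le1 le2 a φ (Sum.elim w ys ∘ e ∘ Sum.inl)
          (Sum.elim w ys ∘ e ∘ Sum.inr) := by
  have key : ∀ {M : Type _} (f : Fin k ⊕ Fin n → M),
      Sum.elim (f ∘ Sum.inl) (f ∘ Sum.inr) = f := fun f => Sum.elim_comp_inl_inr f
  induction h with
  | falsum => exact ⟨_, .falsum, fun _ _ _ _ _ => Iff.rfl⟩
  | of_isAtomic h =>
    cases h with
    | equal t₁ t₂ =>
      refine ⟨_, (BoundedFormula.IsAtomic.equal (t₁.relabel e) (t₂.relabel e)).isQF, ?_⟩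
      intro le1 le2 a w ys
      simp only [RealB, BoundedFormula.realize_bdEqual, Term.realize_relabel]
      rw [← Function.comp_assoc, ← Function.comp_assoc, key]
    | rel R ts =>
      refine ⟨_, (BoundedFormula.IsAtomic.rel R (fun i => (ts i).relabel e)).isQF, ?_⟩
      intro le1 le2 a w ys
      simp only [RealB, BoundedFormula.realize_rel, Term.realize_relabel]
      rw [← Function.comp_assoc, ← Function.comp_assoc, key]
  | imp _ _ ih₁ ih₂ =>
    obtain ⟨ψ₁, h₁, H₁⟩ := ih₁
    obtain ⟨ψ₂, h₂, H₂⟩ := ih₂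
    refine ⟨_, h₁.imp h₂, ?_⟩
    intro le1 le2 a w ys
    have A := H₁ le1 le2 a w ys
    have B := H₂ le1 le2 a w ys
    simp only [RealB, BoundedFormula.realize_imp] at *
    rw [A, B]

theorem pi1_neg {k n : ℕ} {φ : ordLang.BoundedFormula (Fin k) n} (h : IsPi1 φ)
    {k' m : ℕ} (e : Fin k ⊕ Fin n → Fin k' ⊕ Fin m) :
    ∃ ψ : ordLang.BoundedFormula (Fin k') m, IsSigma1 ψ ∧
      ∀ (le1 le2 : Ordinal → Ordinal → Prop) (a : Ordinal) (w : Fin k' → {x : Ordinal // x < a})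
        (ys : Fin m → {x : Ordinal // x < a}),
        RealB le1 le2 a ψ w ys ↔ ¬ RealB le1 le2 a φ (Sum.elim w ys ∘ e ∘ Sum.inl)
          (Sum.elim w ys ∘ e ∘ Sum.inr) := by
  induction h generalizing m with
  | of_isQF h =>
    obtain ⟨ψ, h₁, H⟩ := qf_subst h e
    refine ⟨ψ.not, .of_isQF h₁.not, ?_⟩
    intro le1 le2 a w ys
    rw [← H]
    simp only [RealB, BoundedFormula.realize_not]
  | @all n φ h ih =>
    let e' : Fin k ⊕ Fin (n + 1) → Fin k' ⊕ Fin (m + 1) :=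
      Sum.elim (fun i => Sum.map id Fin.castSucc (e (Sum.inl i)))
        (Fin.snoc (fun i => Sum.map id Fin.castSucc (e (Sum.inr i))) (Sum.inr (Fin.last m)))
    obtain ⟨ψ, h₁, H⟩ := ih e'
    refine ⟨ψ.ex, .ex h₁, ?_⟩
    intro le1 le2 a w ys
    rw [realB_ex]
    have hall : ∀ v xs, RealB le1 le2 a φ.all v xs ↔ ∀ x, RealB le1 le2 a φ v (Fin.snoc xs x) :=
      fun v xs => Iff.rfl
    rw [hall, not_forall]
    refine exists_congr fun x => ?_
    rw [H]
    have hs : ∀ z, Sum.elim w (Fin.snoc ys x : Fin (m + 1) → {x : Ordinal // x < a})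
        (Sum.map id Fin.castSucc z) = Sum.elim w ys z := by
      rintro (z | z) <;> simp
    have h1 : Sum.elim w (Fin.snoc ys x : Fin (m + 1) → {x : Ordinal // x < a}) ∘ e' ∘ Sum.inl
        = Sum.elim w ys ∘ e ∘ Sum.inl := by
      funext i
      exact hs _
    have h2 : Sum.elim w (Fin.snoc ys x : Fin (m + 1) → {x : Ordinal // x < a}) ∘ e' ∘ Sum.inr
        = Fin.snoc (Sum.elim w ys ∘ e ∘ Sum.inr) x := by
      funext i
      refine Fin.lastCases ?_ (fun i => ?_) i
      · simp [e']
      · simp only [Function.comp, e', Sum.elim_inr, Fin.snoc_castSucc, hs]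
    rw [h1, h2]

theorem pi1_up {le1 le2 : Ordinal → Ordinal → Prop} {a b : Ordinal} 
    (hab : ElemSub (fun _ φ => IsSigma1 φ) le1 le2 a b) {k n : ℕ}
    {φ : ordLang.BoundedFormula (Fin k) n} (h : IsPi1 φ)
    (v : Fin k → {x : Ordinal // x < a}) (xs : Fin n → {x : Ordinal // x < a})
    (hr : RealB le1 le2 a φ v xs) :
    RealB le1 le2 b φ (segIncl hab.1 ∘ v) (segIncl hab.1 ∘ xs) := by
  obtain ⟨hle, H⟩ := hab
  obtain ⟨ψ, hψ, Hψ⟩ := pi1_neg h (k' := k + n) (m := 0) (Sum.inl ∘ finSumFinEquiv)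
  have hH := H _ ψ hψ (Fin.append v xs)
  rw [realizeIn_iff _ _ _ _ _ Fin.elim0, realizeIn_iff _ _ _ _ _ Fin.elim0, Hψ, Hψ,
    not_iff_not] at hH
  convert hH.1 ?_ using 1
  · funext i; simp [segIncl]
  · funext i; simp [segIncl]
  · convert hr using 1
    · funext i; simp
    · funext i; simp

theorem sigma2_up {le1 le2 : Ordinal → Ordinal → Prop} {a b : Ordinal} 
    (hab : ElemSub (fun _ φ => IsSigma1 φ) le1 le2 a b) {k n : ℕ}
    {φ : ordLang.BoundedFormula (Fin k) n} (h : IsSigma2 φ)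
    (v : Fin k → {x : Ordinal // x < a}) (xs : Fin n → {x : Ordinal // x < a})
    (hr : RealB le1 le2 a φ v xs) :
    RealB le1 le2 b φ (segIncl hab.1 ∘ v) (segIncl hab.1 ∘ xs) := by
  induction h with
  | of_isPi1 h => exact pi1_up hab h v xs hr
  | ex h ih =>
    obtain ⟨x, hx⟩ := realB_ex.1 hr
    refine realB_ex.2 ⟨segIncl hab.1 x, ?_⟩
    rw [← segIncl_snoc]
    exact ih _ hx

theorem sigma1_sigma2 {k n : ℕ} {φ : ordLang.BoundedFormula (Fin k) n} (h : IsSigma1 φ) :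
    IsSigma2 φ := by
  induction h with
  | of_isQF h => exact .of_isPi1 (.of_isQF h)
  | ex _ ih => exact .ex ih

theorem elemSub_refl (C : ∀ k : ℕ, ordLang.Formula (Fin k) → Prop)
    (le1 le2 : Ordinal → Ordinal → Prop) (a : Ordinal) : ElemSub C le1 le2 a a :=
  ⟨le_rfl, fun _ _ _ _ => Iff.rfl⟩

theorem elemSub_trans {C : ∀ k : ℕ, ordLang.Formula (Fin k) → Prop}
    {le1 le2 : Ordinal → Ordinal → Prop} {a b c : Ordinal} (h₁ : ElemSub C le1 le2 a b)
    (h₂ : ElemSub C le1 le2 b c) : ElemSub C le1 le2 a c :=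
  ⟨h₁.1.trans h₂.1, fun k φ hφ v => (h₁.2 k φ hφ v).trans (h₂.2 k φ hφ _)⟩

theorem elemSub_21 {le1 le2 : Ordinal → Ordinal → Prop} {a b : Ordinal}
    (h : ElemSub (fun _ φ => IsSigma2 φ) le1 le2 a b) :
    ElemSub (fun _ φ => IsSigma1 φ) le1 le2 a b :=
  ⟨h.1, fun k φ hφ v => h.2 k φ (sigma1_sigma2 hφ) v⟩

theorem elemSub_resp1 {le1 le2 : Ordinal → Ordinal → Prop} {a b c : Ordinal}
    (hab : a ≤ b) (hbc : b ≤ c) (h : ElemSub (fun _ φ => IsSigma1 φ) le1 le2 a c) :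
    ElemSub (fun _ φ => IsSigma1 φ) le1 le2 a b := by
  refine ⟨hab, fun k φ hφ v => ⟨fun hr => ?_, fun hr => (h.2 k φ hφ v).2 ?_⟩⟩
  · rw [realizeIn_iff _ _ _ _ _ Fin.elim0] at hr
    exact (realizeIn_iff _ _ _ _ _ _).2 (sigma1_up le1 le2 hab hφ v _ hr)
  · rw [realizeIn_iff _ _ _ _ _ Fin.elim0] at hr
    exact (realizeIn_iff _ _ _ _ _ _).2 (sigma1_up le1 le2 hbc hφ _ _ hr)

theorem elemSub_resp2 {le1 le2 : Ordinal → Ordinal → Prop} {a b c : Ordinal}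
    (hab : ElemSub (fun _ φ => IsSigma1 φ) le1 le2 a b)
    (hbc : ElemSub (fun _ φ => IsSigma1 φ) le1 le2 b c)
    (h : ElemSub (fun _ φ => IsSigma2 φ) le1 le2 a c) :
    ElemSub (fun _ φ => IsSigma2 φ) le1 le2 a b := by
  refine ⟨hab.1, fun k φ hφ v => ⟨fun hr => ?_, fun hr => (h.2 k φ hφ v).2 ?_⟩⟩
  · rw [realizeIn_iff _ _ _ _ _ Fin.elim0] at hr
    exact (realizeIn_iff _ _ _ _ _ _).2 (sigma2_up hab hφ v _ hr)
  · rw [realizeIn_iff _ _ _ _ _ Fin.elim0] at hr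
    exact (realizeIn_iff _ _ _ _ _ _).2 (sigma2_up hbc hφ _ _ hr)

theorem elemSub_forest1 {le1 le2 : Ordinal → Ordinal → Prop} {p q r : Ordinal}
    (hqr : q ≤ r)
    (hq : ElemSub (fun _ φ => IsSigma1 φ) le1 le2 q p)
    (hr : ElemSub (fun _ φ => IsSigma1 φ) le1 le2 r p) :
    ElemSub (fun _ φ => IsSigma1 φ) le1 le2 q r :=
  elemSub_resp1 hqr hr.1 hq

theorem elemSub_forest2 {le1 le2 : Ordinal → Ordinal → Prop} {p q r : Ordinal}
    (hqr : q ≤ r)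
    (hq : ElemSub (fun _ φ => IsSigma2 φ) le1 le2 q p)
    (hr : ElemSub (fun _ φ => IsSigma2 φ) le1 le2 r p) :
    ElemSub (fun _ φ => IsSigma2 φ) le1 le2 q r :=
  elemSub_resp2 (elemSub_forest1 hqr (elemSub_21 hq) (elemSub_21 hr)) (elemSub_21 hr) hq

end Helpers

theorem stmt3 (le1 le2 : Ordinal → Ordinal → Prop) (h : IsR2Pair le1 le2)
    (X : Finset Ordinal) :
    (∀ a ∈ X, le1 a a) ∧
    (∀ a ∈ X, ∀ b ∈ X, ∀ c ∈ X, le1 a b → le1 b c → le1 a c) ∧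
    (∀ a ∈ X, ∀ b ∈ X, le1 a b → le1 b a → a = b) ∧
    (∀ a ∈ X, le2 a a) ∧
    (∀ a ∈ X, ∀ b ∈ X, ∀ c ∈ X, le2 a b → le2 b c → le2 a c) ∧
    (∀ a ∈ X, ∀ b ∈ X, le2 a b → le2 b a → a = b) ∧
    (∀ a ∈ X, ∀ b ∈ X, le2 a b → le1 a b) ∧
    (∀ a ∈ X, ∀ b ∈ X, le1 a b → a ≤ b) ∧
    (∀ p ∈ X, ∀ q ∈ X, ∀ r ∈ X, le1 q p → le1 r p → le1 q r ∨ le1 r q) ∧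
    (∀ p ∈ X, ∀ q ∈ X, ∀ r ∈ X, le2 q p → le2 r p → le2 q r ∨ le2 r q) ∧
    (∀ p ∈ X, ∀ q ∈ X, ∀ r ∈ X, p ≤ q → q ≤ r → le1 p r → le1 p q) ∧
    (∀ p ∈ X, ∀ q ∈ X, ∀ r ∈ X, le1 p q → le1 q r → le2 p r → le2 p q) := by
  obtain ⟨h1, h2⟩ := h
  refine ⟨fun a _ => ?_, fun a _ b _ c _ x y => ?_, fun a _ b _ x y => ?_, fun a _ => ?_,
    fun a _ b _ c _ x y => ?_, fun a _ b _ x y => ?_, fun a _ b _ x => ?_, fun a _ b _ x => ?_,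
    fun p _ q _ r _ x y => ?_, fun p _ q _ r _ x y => ?_, fun p _ q _ r _ x y z => ?_,
    fun p _ q _ r _ x y z => ?_⟩
  · exact (h1 _ _).2 (elemSub_refl _ _ _ _)
  · exact (h1 _ _).2 (elemSub_trans ((h1 _ _).1 x) ((h1 _ _).1 y))
  · exact le_antisymm ((h1 _ _).1 x).1 ((h1 _ _).1 y).1
  · exact (h2 _ _).2 (elemSub_refl _ _ _ _)
  · exact (h2 _ _).2 (elemSub_trans ((h2 _ _).1 x) ((h2 _ _).1 y))
  · exact le_antisymm ((h2 _ _).1 x).1 ((h2 _ _).1 y).1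
  · exact (h1 _ _).2 (elemSub_21 ((h2 _ _).1 x))
  · exact ((h1 _ _).1 x).1
  · rcases le_total q r with hh | hh
    · exact .inl ((h1 _ _).2 (elemSub_forest1 hh ((h1 _ _).1 x) ((h1 _ _).1 y)))
    · exact .inr ((h1 _ _).2 (elemSub_forest1 hh ((h1 _ _).1 y) ((h1 _ _).1 x)))
  · rcases le_total q r with hh | hh
    · exact .inl ((h2 _ _).2 (elemSub_forest2 hh ((h2 _ _).1 x) ((h2 _ _).1 y)))
    · exact .inr ((h2 _ _).2 (elemSub_forest2 hh ((h2 _ _).1 y) ((h2 _ _).1 x)))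
  · exact (h1 _ _).2 (elemSub_resp1 x y ((h1 _ _).1 z))
  · exact (h2 _ _).2 (elemSub_resp2 ((h1 _ _).1 x) ((h1 _ _).1 y) ((h2 _ _).1 z))
end
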